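/- Let G be a group having a nilpotent subgroup of finite index. Let (G, X, 0) be an expansive 0-gluing pointed dynamical system whose homoclinic points are dense in X. Then every asymptotically nilpotent endomorphism f : X → X of (G, X, 0) is nilpotent. -/

import Mathlib

/-- A point `x` is homoclinic: `g • x` is eventually close to `x₀` outside finite
subsets of `G`. -/
def Homoclinic (G : Type) [Group G] {X : Type} [MetricSpace X] [MulAction G X]
    (x₀ x : X) : Prop :=
  ∀ ε : ℝ, 0 < ε → ∃ E : Finset G, ∀ g : G, g ∉ E → dist (g • x) x₀ < ε

/-- The `0`-gluing property of a pointed dynamical system. -/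
def ZeroGluing (G : Type) [Group G] {X : Type} [MetricSpace X] [MulAction G X]
    (x₀ : X) : Prop :=
  ∀ ε : ℝ, 0 < ε → ∃ δ : ℝ, 0 < δ ∧ ∃ E : Finset G,
    ∀ (I : Type) (A : I → Set G) (p : I → X),
      (∀ g : G, ∃! i : I, g ∈ A i) →
      (∀ i : I, ∀ g ∈ A i, (∃ e ∈ E, e * g ∉ A i) → dist (g • p i) x₀ < δ) →
      ∃ y : X, ∀ i : I, ∀ g ∈ A i, dist (g • y) (g • p i) < ε

/-!
Call a point finitely supported if only finitely many group elements move it visibly away from `x₀`;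
homoclinic points are of this kind. Superposing a mortal point with mortal points in a ball on which
`f^[t]` is uniformly small for large `t` (Baire) shows that the supports of all mortal finitely
supported points grow by a bounded amount, once and for all times. If these points are dense, the
bound passes to every point, and compactness makes the nilpotency uniform.

It remains to see that finitely supported points are mortal. Let `z` be central of infinite order.
Translates of a point along `⟨z ^ i⟩` can be glued into a `z ^ i`-periodic point, which lives over
`G ⧸ ⟨z ^ i⟩` and is mortal by induction on the group. Gluing only the translates along a set `S` of
exponents gives points whose evolution eventually keeps away from the sites in `S`, which therefore
act as barriers for it. Hence points made of two rays stay near the ends of the rays and die, so do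
single rays, and so do long finite blocks. Such blocks approximate any finitely supported point,
whose support then stays bounded for all times; by asymptotic nilpotency it is mortal too. Central
extensions, finite-index overgroups and finitely generated subgroups take one from the trivial group
to the virtually nilpotent ones.
-/

open Filter Topology
open scoped Pointwise commutatorElement

/-- The set of group elements which move `x` visibly away from the base point `x₀`, at a quarter of
the expansivity constant `Δ`. -/
def orbitSupp (G : Type*) {X : Type*} [SMul G X] [Dist X] (x₀ : X) (Δ : ℝ) (x : X) : Set G :=
  {g | Δ / 4 < dist (g • x) x₀}

/-- The action of `G` is expansive with expansivity constant `Δ` and fixes the point `x₀`. -/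
structure IsPointedExpansive (G : Type*) {X : Type*} [Group G] [MetricSpace X] [MulAction G X]
    (x₀ : X) (Δ : ℝ) : Prop where
  smul_base : ∀ g : G, g • x₀ = x₀
  pos : 0 < Δ
  eq_of_dist_le : ∀ x y : X, (∀ g : G, dist (g • x) (g • y) ≤ Δ) → x = y

/-- Points whose supports have disjoint `N`-neighbourhoods can be superposed up to an error `η`.
This replaces the designations in the `0`-gluing property by families of supports. -/
def Glues {G X : Type*} [Group G] [MetricSpace X] [MulAction G X] (x₀ : X) (Δ η : ℝ)
    (N : Set G) : Prop :=
  ∀ (I : Type) (p : I → X),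
    Pairwise (fun i j => Disjoint (N * orbitSupp G x₀ Δ (p i)) (N * orbitSupp G x₀ Δ (p j))) →
    ∃ y : X, (∀ i g, (∀ j ≠ i, g ∉ N * orbitSupp G x₀ Δ (p j)) → dist (g • y) (g • p i) < η) ∧
      ∀ g, (∀ j, g ∉ N * orbitSupp G x₀ Δ (p j)) → dist (g • y) x₀ < η

/-- A pointed expansive system in which separated points can be superposed; by expansivity it is
enough to ask for this at the single scale `Δ / 4`. -/
structure IsGluing (G : Type*) {X : Type*} [Group G] [MetricSpace X] [MulAction G X]
    (x₀ : X) (Δ : ℝ) : Prop extends IsPointedExpansive G x₀ Δ where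
  glues : ∃ N : Set G, N.Finite ∧ Glues x₀ Δ (Δ / 4) N

/-- An asymptotically nilpotent endomorphism of a pointed system; that it fixes `x₀` follows from
the convergence of its iterates. -/
structure IsAsympNilpotentEnd (G : Type*) {X : Type*} [SMul G X] [TopologicalSpace X]
    (x₀ : X) (f : X → X) : Prop where
  continuous : Continuous f
  map_smul : ∀ (g : G) (x : X), f (g • x) = g • f x
  tendsto : ∀ x : X, Tendsto (fun n => f^[n] x) atTop (𝓝 x₀)

/-- A point is mortal if some iterate of `f` sends it to `x₀`. -/
def Mortal {X : Type*} (x₀ : X) (f : X → X) (x : X) : Prop :=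
  ∃ n, f^[n] x = x₀

theorem mem_inv_mul_of_mul_mem {G : Type*} [Group G] {W S : Set G} {w g : G} (hw : w ∈ W)
    (h : w * g ∈ S) : g ∈ W⁻¹ * S :=
  ⟨w⁻¹, Set.inv_mem_inv.mpr hw, w * g, h, inv_mul_cancel_left w g⟩

theorem Glues.mono {G X : Type*} [Group G] [MetricSpace X] [MulAction G X] {x₀ : X} {Δ η : ℝ}
    {N N' : Set G} (h : N ⊆ N') (hN : Glues x₀ Δ η N) : Glues x₀ Δ η N' := by
  intro I p hp
  have hsub (i : I) : N * orbitSupp G x₀ Δ (p i) ⊆ N' * orbitSupp G x₀ Δ (p i) :=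
    Set.mul_subset_mul_right h
  obtain ⟨y, hy, hy₀⟩ := hN I p fun i j hij => (hp hij).mono (hsub i) (hsub j)
  exact ⟨y, fun i g hg => hy i g fun j hj hmem => hg j hj (hsub j hmem),
    fun g hg => hy₀ g fun j hmem => hg j (hsub j hmem)⟩

section Expansive

variable {G X : Type*} [Group G] [MetricSpace X] [MulAction G X] {x₀ : X} {Δ : ℝ}

local notation "supp" => orbitSupp G x₀ Δ

theorem notMem_orbitSupp {x : X} {g : G} : g ∉ supp x ↔ dist (g • x) x₀ ≤ Δ / 4 := by
  simp only [orbitSupp, Set.mem_ofPred_eq, not_lt]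

theorem orbitSupp_smul (h : G) (x : X) : supp (h • x) = supp x * {h⁻¹} := by
  ext g
  simp [orbitSupp, smul_smul]

theorem IsPointedExpansive.orbitSupp_base (hE : IsPointedExpansive G x₀ Δ) : supp x₀ = ∅ := by
  ext g
  simp only [orbitSupp, Set.mem_ofPred_eq, hE.smul_base, dist_self, Set.mem_empty_iff_false,
    iff_false, not_lt]
  linarith [hE.pos]

theorem Glues.superpose {η : ℝ} {N : Set G} (hN : Glues x₀ Δ η N) {p q : X}
    (hpq : Disjoint (N * supp p) (N * supp q)) :
    ∃ y : X, (∀ g, g ∉ N * supp q → dist (g • y) (g • p) < η) ∧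
      (∀ g, g ∉ N * supp p → dist (g • y) (g • q) < η) ∧
      ∀ g, g ∉ N * supp p → g ∉ N * supp q → dist (g • y) x₀ < η := by
  obtain ⟨y, hy, hy₀⟩ := hN Bool (fun b => cond b p q) <| by
    rintro (_ | _) (_ | _) hne
    exacts [absurd rfl hne, hpq.symm, hpq, absurd rfl hne]
  refine ⟨y, fun g hg => hy true g ?_, fun g hg => hy false g ?_, fun g hp hq => hy₀ g ?_⟩
  · rintro (_ | _) hne
    exacts [hg, absurd rfl hne]
  · rintro (_ | _) hne
    exacts [absurd rfl hne, hg]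
  · rintro (_ | _)
    exacts [hq, hp]

variable [CompactSpace X] [ContinuousConstSMul G X]

theorem IsPointedExpansive.exists_finite_dist_lt (hE : IsPointedExpansive G x₀ Δ) {η : ℝ}
    (hη : 0 < η) :
    ∃ N : Set G, N.Finite ∧
      ∀ x y : X, (∀ g ∈ N, dist (g • x) (g • y) ≤ Δ) → dist x y < η := by
  have hK : IsCompact {p : X × X | η ≤ dist p.1 p.2} :=
    (isClosed_le continuous_const (continuous_fst.dist continuous_snd)).isCompact
  obtain ⟨N, hN⟩ := hK.elim_finite_subfamily_closed
    (fun g : G => {p : X × X | dist (g • p.1) (g • p.2) ≤ Δ})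
    (fun g => isClosed_le ((continuous_fst.const_smul g).dist (continuous_snd.const_smul g))
      continuous_const) <| by
    refine Set.eq_empty_of_forall_notMem fun p ⟨hη', hp⟩ => hη.not_ge ?_
    have heq : p.1 = p.2 := hE.eq_of_dist_le _ _ fun g => Set.mem_iInter.mp hp g
    simpa [heq] using hη'
  refine ⟨N, N.finite_toSet, fun x y hxy => ?_⟩
  by_contra! hη'
  exact (hN.subset ⟨hη', Set.mem_iInter₂.mpr hxy⟩ : (x, y) ∈ (∅ : Set (X × X)))

theorem IsPointedExpansive.exists_finite_dist_base_lt (hE : IsPointedExpansive G x₀ Δ) {η : ℝ}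
    (hη : 0 < η) :
    ∃ N : Set G, N.Finite ∧ ∀ (x : X) (g : G), g ∉ N * supp x → dist (g • x) x₀ < η := by
  obtain ⟨N, hN, hNη⟩ := hE.exists_finite_dist_lt hη
  refine ⟨N⁻¹, hN.inv, fun x g hg => hNη _ _ fun h hh => ?_⟩
  have hsmall : h * g ∉ supp x := fun hmem => hg (mem_inv_mul_of_mul_mem hh hmem)
  rw [smul_smul, hE.smul_base]
  linarith [notMem_orbitSupp.mp hsmall, hE.pos]

theorem IsGluing.exists_glues (hG : IsGluing G x₀ Δ) {η : ℝ} (hη : 0 < η) :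
    ∃ N : Set G, N.Finite ∧ 1 ∈ N ∧ Glues x₀ Δ η N := by
  obtain ⟨N, hNfin, hN⟩ := hG.glues
  obtain ⟨M, hMfin, hM⟩ := hG.exists_finite_dist_lt hη
  set N' : Set G := insert 1 (M⁻¹ * N ∪ N)
  have hmove {p : X} {g h : G} (hh : h ∈ M) (hg : g ∉ N' * supp p) : h * g ∉ N * supp p := by
    refine fun hmem => hg (Set.mul_subset_mul_right ?_ (?_ : g ∈ M⁻¹ * N * supp p))
    · exact Set.subset_union_left.trans (Set.subset_insert _ _)
    · rw [mul_assoc]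
      exact mem_inv_mul_of_mul_mem hh hmem
  refine ⟨N', (hMfin.inv.mul hNfin |>.union hNfin).insert 1, Set.mem_insert _ _, fun I p hp => ?_⟩
  have hsub (i : I) : N * supp (p i) ⊆ N' * supp (p i) :=
    Set.mul_subset_mul_right (Set.subset_union_right.trans (Set.subset_insert _ _))
  obtain ⟨y, hy, hy₀⟩ := hN I p fun i j hij => (hp hij).mono (hsub i) (hsub j)
  refine ⟨y, fun i g hg => hM _ _ fun h hh => ?_, fun g hg => hM _ _ fun h hh => ?_⟩
  · rw [smul_smul, smul_smul]
    linarith [hy i (h * g) fun j hj => hmove hh (hg j hj), hG.pos]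
  · rw [smul_smul, hG.smul_base]
    linarith [hy₀ (h * g) fun j => hmove hh (hg j), hG.pos]

end Expansive

theorem ZeroGluing.isGluing {G X : Type} [Group G] [MetricSpace X] [CompactSpace X] [MulAction G X]
    [ContinuousConstSMul G X] {x₀ : X} {Δ : ℝ} (hglue : ZeroGluing G x₀)
    (hE : IsPointedExpansive G x₀ Δ) : IsGluing G x₀ Δ := by
  classical
  have hΔ := hE.pos
  obtain ⟨δ, hδ, E, hEδ⟩ := hglue (Δ / 8) (by positivity)
  obtain ⟨N₁, hN₁, hdist₁⟩ := hE.exists_finite_dist_base_lt hδ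
  obtain ⟨N₂, hN₂, hdist₂⟩ := hE.exists_finite_dist_base_lt (show 0 < Δ / 8 by positivity)
  set N : Set G := (E : Set G) * N₁ ∪ N₂
  refine ⟨hE, N, (E.finite_toSet.mul hN₁).union hN₂, fun I p hp => ?_⟩
  set U : I → Set G := fun i => N * orbitSupp G x₀ Δ (p i)
  set A : Option I → Set G := fun o => o.elim {g | ∀ i, g ∉ U i} U
  have hpartition (g : G) : ∃! o, g ∈ A o := by
    by_cases hg : ∃ i, g ∈ U i
    · obtain ⟨i, hi⟩ := hg
      refine ⟨some i, hi, ?_⟩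
      rintro (_ | j) hj
      · exact absurd hi (hj i)
      · by_contra hne
        exact Set.disjoint_left.mp (hp fun h => hne (congrArg some h)) hj hi
    · push Not at hg
      refine ⟨none, hg, ?_⟩
      rintro (_ | j) hj
      exacts [rfl, absurd hj (hg j)]
  have hborder : ∀ o, ∀ g ∈ A o, (∃ e ∈ E, e * g ∉ A o) → dist (g • o.elim x₀ p) x₀ < δ := by
    rintro (_ | i) g - ⟨e, he, heg⟩
    · simpa [hE.smul_base] using hδ
    · refine hdist₁ _ _ fun hmem => heg (Set.mul_subset_mul_right Set.subset_union_left ?_)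
      rw [mul_assoc]
      exact Set.mul_mem_mul he hmem
  obtain ⟨y, hy⟩ := hEδ (Option I) A (fun o => o.elim x₀ p) hpartition hborder
  have hy₀ (g : G) (hg : ∀ i, g ∉ U i) : dist (g • y) x₀ < Δ / 8 := by
    simpa only [Option.elim_none, hE.smul_base] using hy none g hg
  refine ⟨y, fun i g hg => ?_, fun g hg => (hy₀ g hg).trans (by linarith)⟩
  by_cases hi : g ∈ U i
  · exact (hy (some i) g hi).trans (by linarith)
  · have hfar : dist (g • p i) x₀ < Δ / 8 :=
      hdist₂ _ _ fun hmem => hi (Set.mul_subset_mul_right Set.subset_union_right hmem)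
    have hall (j : I) : g ∉ U j := by
      rcases eq_or_ne j i with rfl | hj
      exacts [hi, hg j hj]
    linarith [hy₀ g hall, dist_triangle_right (g • y) (g • p i) x₀]

theorem exists_mem_ball_inter_subset_of_closure_subset_iUnion {X : Type*} [MetricSpace X]
    [CompactSpace X] {S : Set X} (hS : S.Nonempty) {C : ℕ → Set X} (hC : ∀ n, IsClosed (C n))
    (hcover : closure S ⊆ ⋃ n, C n) :
    ∃ b ∈ S, ∃ ρ > 0, ∃ n, ∀ x ∈ S, dist x b < ρ → x ∈ C n := by
  have : CompactSpace (closure S) := isCompact_iff_compactSpace.mp isClosed_closure.isCompact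
  have : Nonempty (closure S) := hS.closure.to_subtype
  obtain ⟨n, y, hy⟩ := nonempty_interior_of_iUnion_of_closed
    (fun n => (hC n).preimage (continuous_subtype_val (p := (· ∈ closure S))))
    (Set.eq_univ_of_forall fun y => by simpa using hcover y.2)
  obtain ⟨r, hr, hball⟩ := Metric.isOpen_iff.mp isOpen_interior y hy
  obtain ⟨b, hb, hyb⟩ := Metric.mem_closure_iff.mp y.2 (r / 2) (by positivity)
  refine ⟨b, hb, r / 2, by positivity, n, fun x hx hxb => ?_⟩
  have hxy : (⟨x, subset_closure hx⟩ : closure S) ∈ Metric.ball y r := by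
    rw [Metric.mem_ball, Subtype.dist_eq]
    linarith [dist_triangle x b y, dist_comm b (y : X)]
  exact Set.mem_preimage.mp (interior_subset (hball hxy))

theorem Mortal.of_iterate {X : Type*} {x₀ x : X} {f : X → X} {k : ℕ}
    (h : Mortal x₀ f (f^[k] x)) : Mortal x₀ f x := by
  obtain ⟨n, hn⟩ := h
  exact ⟨n + k, by rwa [Function.iterate_add_apply]⟩

section Endomorphism

variable {G X : Type*} [Group G] [MetricSpace X] [MulAction G X] {x₀ : X} {Δ : ℝ} {f : X → X}

local notation "supp" => orbitSupp G x₀ Δ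

theorem IsAsympNilpotentEnd.iterate_base (hf : IsAsympNilpotentEnd G x₀ f) (t : ℕ) :
    f^[t] x₀ = x₀ :=
  Function.iterate_fixed
    (isFixedPt_of_tendsto_iterate (hf.tendsto x₀) hf.continuous.continuousAt) t

theorem IsAsympNilpotentEnd.iterate_smul (hf : IsAsympNilpotentEnd G x₀ f) (t : ℕ) (g : G)
    (x : X) : f^[t] (g • x) = g • f^[t] x :=
  Function.Commute.iterate_left (fun y => hf.map_smul g y) t x

theorem IsAsympNilpotentEnd.iterate_eq_base_of_le (hf : IsAsympNilpotentEnd G x₀ f) {x : X}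
    {n t : ℕ} (hn : f^[n] x = x₀) (h : n ≤ t) : f^[t] x = x₀ := by
  rw [← Nat.sub_add_cancel h, Function.iterate_add_apply, hn, hf.iterate_base]

theorem IsAsympNilpotentEnd.mortal_iterate (hf : IsAsympNilpotentEnd G x₀ f) {x : X}
    (h : Mortal x₀ f x) (k : ℕ) : Mortal x₀ f (f^[k] x) := by
  obtain ⟨n, hn⟩ := h
  exact ⟨n, by rw [← Function.iterate_add_apply, add_comm, Function.iterate_add_apply, hn,
    hf.iterate_base]⟩

theorem IsAsympNilpotentEnd.mortal_smul (hf : IsAsympNilpotentEnd G x₀ f)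
    (hE : IsPointedExpansive G x₀ Δ) {x : X} (h : Mortal x₀ f x) (g : G) :
    Mortal x₀ f (g • x) := by
  obtain ⟨n, hn⟩ := h
  exact ⟨n, by rw [hf.iterate_smul, hn, hE.smul_base]⟩

variable [ContinuousConstSMul G X]

theorem IsPointedExpansive.eventually_forall_dist_lt (hE : IsPointedExpansive G x₀ Δ)
    (hf : IsAsympNilpotentEnd G x₀ f) {W : Set G} (hW : W.Finite) {η : ℝ} (hη : 0 < η) (x : X) :
    ∀ᶠ t in atTop, ∀ g ∈ W, dist (g • f^[t] x) x₀ < η := by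
  rw [eventually_all_finite hW]
  intro g _
  have hlim : Tendsto (fun t => g • f^[t] x) atTop (𝓝 x₀) := by
    simpa only [hE.smul_base] using (hf.tendsto x).const_smul g
  exact Metric.tendsto_nhds.mp hlim η hη

theorem IsPointedExpansive.mortal_of_supp_iterate_subset (hE : IsPointedExpansive G x₀ Δ)
    (hf : IsAsympNilpotentEnd G x₀ f) {F : Set G} (hF : F.Finite) {x : X} {T : ℕ}
    (h : ∀ t ≥ T, supp (f^[t] x) ⊆ F) : Mortal x₀ f x := by
  obtain ⟨t, hsmall, ht⟩ :=
    ((hE.eventually_forall_dist_lt hf hF hE.pos x).and (eventually_ge_atTop T)).exists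
  refine ⟨t, hE.eq_of_dist_le _ _ fun g => ?_⟩
  rw [hE.smul_base]
  by_cases hg : g ∈ F
  · exact (hsmall g hg).le
  · linarith [notMem_orbitSupp.mp fun hmem => hg (h t ht hmem), hE.pos]

variable [CompactSpace X]

theorem IsPointedExpansive.exists_iterate_window (hE : IsPointedExpansive G x₀ Δ)
    (hf : IsAsympNilpotentEnd G x₀ f) (t : ℕ) {η : ℝ} (hη : 0 < η) :
    ∃ W : Set G, W.Finite ∧ ∀ (x y : X) (g : G),
      (∀ w ∈ W, dist ((w * g) • x) ((w * g) • y) ≤ Δ) → dist (g • f^[t] x) (g • f^[t] y) < η := by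
  have huc := CompactSpace.uniformContinuous_of_continuous (hf.continuous.iterate t)
  obtain ⟨ρ, hρ, hfρ⟩ := Metric.uniformContinuous_iff.mp huc η hη
  obtain ⟨W, hW, hWρ⟩ := hE.exists_finite_dist_lt hρ
  refine ⟨W, hW, fun x y g hxy => ?_⟩
  rw [← hf.iterate_smul, ← hf.iterate_smul]
  exact hfρ (hWρ _ _ fun w hw => by simpa only [smul_smul] using hxy w hw)

theorem IsPointedExpansive.exists_supp_iterate_subset (hE : IsPointedExpansive G x₀ Δ)
    (hf : IsAsympNilpotentEnd G x₀ f) (t : ℕ) :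
    ∃ W : Set G, W.Finite ∧ ∀ x : X, supp (f^[t] x) ⊆ W * supp x := by
  have hΔ := hE.pos
  obtain ⟨W, hW, hclose⟩ := hE.exists_iterate_window hf t (show 0 < Δ / 4 by positivity)
  refine ⟨W⁻¹, hW.inv, fun x g hg => ?_⟩
  by_contra hfar
  refine notMem_orbitSupp.mpr ?_ hg
  have hlt := hclose x x₀ g fun w hw => by
    have hw' : w * g ∉ supp x := fun hmem => hfar (mem_inv_mul_of_mul_mem hw hmem)
    rw [hE.smul_base]
    linarith [notMem_orbitSupp.mp hw']
  rw [hf.iterate_base, hE.smul_base] at hlt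
  exact hlt.le

theorem IsPointedExpansive.exists_uniform_decay (hE : IsPointedExpansive G x₀ Δ)
    (hf : IsAsympNilpotentEnd G x₀ f) {S : Set X} (hS : S.Nonempty) {W : Set G} (hW : W.Finite)
    {η : ℝ} (hη : 0 < η) :
    ∃ b ∈ S, ∃ ρ > 0, ∃ n : ℕ, ∀ x ∈ S, dist x b < ρ →
      ∀ t ≥ n, ∀ g ∈ W, dist (g • f^[t] x) x₀ ≤ η := by
  refine exists_mem_ball_inter_subset_of_closure_subset_iUnion hS
    (C := fun n => {x | ∀ t ≥ n, ∀ g ∈ W, dist (g • f^[t] x) x₀ ≤ η}) (fun n => ?_) fun x _ => ?_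
  · simp only [Set.ofPred_forall]
    exact isClosed_iInter fun t => isClosed_iInter fun _ => isClosed_iInter fun g =>
      isClosed_iInter fun _ => isClosed_le
        (((hf.continuous.iterate t).const_smul g).dist continuous_const) continuous_const
  · obtain ⟨n, hn⟩ := eventually_atTop.mp (hE.eventually_forall_dist_lt hf hW hη x)
    exact Set.mem_iUnion.mpr ⟨n, fun t ht g hg => (hn t ht g hg).le⟩

end Endomorphism

section SupportGrowth

theorem disjoint_mul_right_iff {G : Type*} [Group G] {N S T : Set G} :
    Disjoint S (N * T) ↔ Disjoint (N⁻¹ * S) T := by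
  simp only [Set.disjoint_left]
  constructor
  · rintro h _ ⟨n, hn, s, hs, rfl⟩ hT
    exact h hs ⟨n⁻¹, hn, n * s, hT, inv_mul_cancel_left n s⟩
  · rintro h _ hS ⟨n, hn, t, ht, rfl⟩
    exact h (mem_inv_mul_of_mul_mem hn hS) ht

variable {G X : Type*} [Group G] [MetricSpace X] [MulAction G X] {x₀ : X} {Δ : ℝ} {f : X → X}
  [CompactSpace X] [ContinuousConstSMul G X]

local notation "supp" => orbitSupp G x₀ Δ

/- Near `U` the point `x` looks like `x₀` and `y` looks like `b`, and both die in time `T`. -/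
theorem IsPointedExpansive.exists_iterate_eq_of_mortal_summand (hE : IsPointedExpansive G x₀ Δ)
    (hf : IsAsympNilpotentEnd G x₀ f) {b : X} {T : ℕ} (hb : f^[T] b = x₀) :
    ∃ M : Set G, M.Finite ∧ ∀ (x y : X) (U V : Set G), supp x ⊆ V → Disjoint (M * U) V →
      (∀ g ∉ U, dist (g • y) (g • x) ≤ Δ) → (∀ g ∉ V, dist (g • y) (g • b) ≤ Δ) →
      f^[T] y = f^[T] x := by
  have hΔ := hE.pos
  obtain ⟨W, hW, hclose⟩ := hE.exists_iterate_window hf T (show 0 < Δ / 2 by positivity)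
  refine ⟨W * W⁻¹, hW.mul hW.inv, fun x y U V hxV hUV hyx hyb => hE.eq_of_dist_le _ _ fun g => ?_⟩
  by_cases hg : ∃ w ∈ W, w * g ∈ U
  · have hV {w : G} (hw : w ∈ W) : w * g ∉ V := by
      obtain ⟨w', hw', hU⟩ := hg
      refine Set.disjoint_left.mp hUV ?_
      rw [mul_assoc]
      exact Set.mul_mem_mul hw (mem_inv_mul_of_mul_mem hw' hU)
    have hy := hclose y b g fun w hw => hyb _ (hV hw)
    have hx := hclose x x₀ g fun w hw => by
      rw [hE.smul_base]
      linarith [notMem_orbitSupp.mp fun hmem => hV hw (hxV hmem)]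
    rw [hb, hE.smul_base] at hy
    rw [hf.iterate_base, hE.smul_base] at hx
    linarith [dist_triangle_right (g • f^[T] y) (g • f^[T] x) x₀]
  · push Not at hg
    linarith [hclose y x g fun w hw => hyx _ (hg w hw)]

theorem IsGluing.exists_superposition_iterate_eq (hG : IsGluing G x₀ Δ)
    (hf : IsAsympNilpotentEnd G x₀ f) {b : X} {T : ℕ} (hb : f^[T] b = x₀) :
    ∃ M N : Set G, M.Finite ∧ N.Finite ∧
      ∀ x, Disjoint (M * (N * supp b)) (N * supp x) → ∃ y, f^[T] y = f^[T] x ∧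
        (∀ g ∉ N * supp x, dist (g • y) (g • b) < Δ / 4) ∧
        ∀ g ∉ N * supp b, g ∉ N * supp x → dist (g • y) x₀ < Δ / 4 := by
  have hΔ := hG.pos
  obtain ⟨M, hM, hdie⟩ := hG.exists_iterate_eq_of_mortal_summand hf hb
  obtain ⟨N, hN, h1N, hglues⟩ := hG.exists_glues (show 0 < Δ / 4 by positivity)
  refine ⟨insert 1 M, N, hM.insert 1, hN, fun x hdisj => ?_⟩
  obtain ⟨y, hyb, hyx, hy₀⟩ := hglues.superpose (p := b) (q := x)
    (hdisj.mono_left (Set.subset_mul_right _ (Set.mem_insert _ _)))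
  refine ⟨y, hdie x y _ _ (Set.subset_mul_right _ h1N)
    (hdisj.mono_left (Set.mul_subset_mul_right (Set.subset_insert _ _)))
    (fun g hg => by linarith [hyx g hg]) (fun g hg => by linarith [hyb g hg]), hyb, hy₀⟩

theorem IsGluing.exists_dist_iterate_le (hG : IsGluing G x₀ Δ)
    (hf : IsAsympNilpotentEnd G x₀ f) (B : Subgroup G) :
    ∃ R : Set G, R.Finite ∧ ∃ T : ℕ, ∀ (x : X) (F : Set G), F.Finite → Mortal x₀ f x →
      supp x ⊆ F * B → Disjoint (R * B) (supp x) → ∀ t ≥ T, dist (f^[t] x) x₀ ≤ Δ / 4 := by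
  have hΔ := hG.pos
  have hE := hG.toIsPointedExpansive
  set S : Set X := {x | Mortal x₀ f x ∧ ∃ F : Set G, F.Finite ∧ supp x ⊆ F * B}
  have hS : S.Nonempty := ⟨x₀, ⟨0, rfl⟩, ∅, Set.finite_empty, by simp [hE.orbitSupp_base]⟩
  obtain ⟨b, ⟨⟨T₀, hT₀⟩, F₀, hF₀, hbF₀⟩, ρ, hρ, n, hn⟩ :=
    hE.exists_uniform_decay hf hS (Set.finite_singleton 1) (show 0 < Δ / 4 by positivity)
  obtain ⟨P, hP, hPρ⟩ := hE.exists_finite_dist_lt hρ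
  obtain ⟨M, N, hM, hN, hsuperpose⟩ := hG.exists_superposition_iterate_eq hf hT₀
  refine ⟨N⁻¹ * (M * (N * F₀) ∪ P), hN.inv.mul ((hM.mul (hN.mul hF₀)).union hP), max n T₀,
    fun x F hF ⟨m, hm⟩ hxF hdisj t ht => ?_⟩
  rw [mul_assoc, ← disjoint_mul_right_iff, Set.union_mul, Set.disjoint_union_left] at hdisj
  have hbU : N * supp b ⊆ N * F₀ * B := by
    rw [mul_assoc]
    exact Set.mul_subset_mul_left hbF₀
  obtain ⟨y, hyT, hyb, hy₀⟩ := hsuperpose x <| hdisj.1.mono_left <| by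
    rw [mul_assoc]
    exact Set.mul_subset_mul_left hbU
  have hyt : f^[t] y = f^[t] x := by
    rw [← Nat.sub_add_cancel ((le_max_right _ _).trans ht), Function.iterate_add_apply, hyT,
      ← Function.iterate_add_apply]
  have hyS : y ∈ S := by
    refine ⟨Mortal.of_iterate (k := T₀) (hyT ▸ hf.mortal_iterate ⟨m, hm⟩ T₀),
      N * F₀ ∪ N * F, (hN.mul hF₀).union (hN.mul hF), fun g hg => ?_⟩
    by_contra hfar
    rw [Set.union_mul, Set.mem_union, not_or] at hfar
    refine notMem_orbitSupp.mpr (hy₀ g (fun h => hfar.1 (hbU h)) fun h => hfar.2 ?_).le hg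
    rw [mul_assoc]
    exact Set.mul_subset_mul_left hxF h
  have hyρ : dist y b < ρ := hPρ _ _ fun h hh => by
    have hV : h ∉ N * supp x := Set.disjoint_left.mp hdisj.2 (Set.subset_mul_left _ B.one_mem hh)
    linarith [hyb h hV]
  simpa only [one_smul, hyt] using hn y hyS hyρ t ((le_max_left _ _).trans ht) 1 rfl

theorem IsGluing.exists_supp_iterate_subset_mul (hG : IsGluing G x₀ Δ)
    (hf : IsAsympNilpotentEnd G x₀ f) (B : Subgroup G) [hB : B.Normal] :
    ∃ R : Set G, R.Finite ∧ ∃ T : ℕ, ∀ (x : X) (F : Set G), F.Finite → Mortal x₀ f x →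
      supp x ⊆ F * B → ∀ t ≥ T, supp (f^[t] x) ⊆ R * B * supp x := by
  obtain ⟨R, hR, T, hdecay⟩ := hG.exists_dist_iterate_le hf B
  refine ⟨R⁻¹, hR.inv, T, fun x F hF hx hxF t ht g hg => ?_⟩
  by_contra hfar
  refine notMem_orbitSupp.mpr ?_ hg
  rw [← hf.iterate_smul]
  refine hdecay (g • x) (F * {g⁻¹}) (hF.mul (Set.finite_singleton _))
    (hf.mortal_smul hG.toIsPointedExpansive hx g) ?_ ?_ t ht
  · rw [orbitSupp_smul, mul_assoc, Subgroup.set_mul_normal_comm _ B, ← mul_assoc]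
    exact Set.mul_subset_mul_right hxF
  · rw [orbitSupp_smul, Set.disjoint_left]
    rintro _ ⟨r, hr, β, hβ, rfl⟩ ⟨s, hs, _, rfl, hsg⟩
    rw [Subgroup.set_mul_normal_comm, mul_assoc] at hfar
    refine hfar ⟨β⁻¹, B.inv_mem hβ, r⁻¹ * s, Set.mul_mem_mul (Set.inv_mem_inv.mpr hr) hs, ?_⟩
    simp only [eq_mul_inv_of_mul_eq hsg, inv_inv, mul_assoc, inv_mul_cancel_left]

theorem IsGluing.exists_supp_iterate_subset_of_mem_closure (hG : IsGluing G x₀ Δ)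
    (hf : IsAsympNilpotentEnd G x₀ f) :
    ∃ R : Set G, R.Finite ∧ ∃ T : ℕ, ∀ x ∈ closure {y | Mortal x₀ f y ∧ (supp y).Finite},
      ∀ t ≥ T, supp (f^[t] x) ⊆ R * supp x := by
  have hΔ := hG.pos
  obtain ⟨R, hR, T, hgrowth⟩ := hG.exists_supp_iterate_subset_mul hf ⊥
  obtain ⟨N, hN, hNlt⟩ := hG.exists_finite_dist_base_lt (show 0 < Δ / 4 by positivity)
  refine ⟨R * N, hR.mul hN, T, fun x hx t ht g hg => ?_⟩
  by_contra hfar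
  refine notMem_orbitSupp.mpr ?_ hg
  have hnear : ∀ᶠ y in 𝓝 x, ∀ r ∈ R, dist ((r⁻¹ * g) • y) x₀ < Δ / 4 := by
    rw [eventually_all_finite hR]
    refine fun r hr => (by fun_prop : Continuous fun y => dist ((r⁻¹ * g) • y) x₀).continuousAt
      |>.eventually_lt continuousAt_const (hNlt x _ fun hmem => hfar ?_)
    rw [mul_assoc]
    exact ⟨r, hr, _, hmem, mul_inv_cancel_left r g⟩
  have hfreq : ∃ᶠ y in 𝓝 x, dist (g • f^[t] y) x₀ ≤ Δ / 4 := by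
    refine (mem_closure_iff_frequently.mp hx).mp (hnear.mono fun y hy ⟨hmort, hfin⟩ => ?_)
    refine notMem_orbitSupp.mp fun hmem => ?_
    obtain ⟨_, ⟨r, hr, β, hβ, rfl⟩, s, hs, rfl⟩ :=
      hgrowth y (supp y) hfin hmort (Set.subset_mul_left _ (Subgroup.one_mem ⊥)) t ht hmem
    obtain rfl := Subgroup.mem_bot.mp hβ
    exact notMem_orbitSupp.mpr (by simpa using (hy r hr).le) hs
  exact (isClosed_le (((hf.continuous.iterate t).const_smul g).dist continuous_const)
    continuous_const).mem_of_frequently_of_tendsto hfreq tendsto_id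

end SupportGrowth

section GluedTranslates

theorem exists_abs_lt_of_mul_zpow_mem {G : Type*} [Group G] {z : G} (hz : ¬ IsOfFinOrder z)
    {D U : Set G} (hD : D.Finite) (hU : U.Finite) :
    ∃ r : ℤ, 0 < r ∧ ∀ d ∈ D, ∀ m : ℤ, d * z ^ m ∈ U → |m| < r := by
  have hfin : {m : ℤ | z ^ m ∈ D⁻¹ * U}.Finite :=
    (hD.inv.mul hU).preimage (injective_zpow_iff_not_isOfFinOrder.mpr hz).injOn
  obtain ⟨M, hM⟩ := (hfin.image abs).bddAbove
  refine ⟨max M 0 + 1, by positivity, fun d hd m hm => ?_⟩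
  have hle : |m| ≤ M := hM ⟨m, mem_inv_mul_of_mul_mem hd hm, rfl⟩
  omega

/-- `β S` is a superposition of the translates `w ^ (-l) • x`, `l ∈ S`, of a finitely supported
point `x`; the `l`-th summand lives on `U * {w ^ l}`, and these sets are disjoint. -/
structure GluedTranslates {G X : Type*} [Group G] [MetricSpace X] [MulAction G X] (x₀ : X) (Δ : ℝ)
    (x : X) (w : G) (U : Set G) (β : Set ℤ → X) : Prop where
  finite : U.Finite
  orbitSupp_subset : orbitSupp G x₀ Δ x ⊆ U
  unique : ∀ (g : G) (l l' : ℤ), g * w ^ (-l) ∈ U → g * w ^ (-l') ∈ U → l = l'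
  dist_translate_lt : ∀ (S : Set ℤ) (g : G), ∀ l ∈ S, g * w ^ (-l) ∈ U →
    dist (g • β S) (g • w ^ (-l) • x) < Δ / 4
  dist_base_lt : ∀ (S : Set ℤ) (g : G), (∀ l ∈ S, g * w ^ (-l) ∉ U) →
    dist (g • β S) x₀ < Δ / 4

variable {G X : Type*} [Group G] [MetricSpace X] [MulAction G X] {x₀ : X} {Δ : ℝ} {f : X → X}
  {x : X} {w z : G} {i : ℤ} {U : Set G} {β : Set ℤ → X}

local notation "supp" => orbitSupp G x₀ Δ

namespace GluedTranslates

theorem dist_smul_lt (hβ : GluedTranslates x₀ Δ x w U β) {k : ℤ} {S S' : Set ℤ} {g : G}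
    (h : ∀ l, g * w ^ (-l) ∈ U → (l + k ∈ S ↔ l ∈ S')) :
    dist ((g * w ^ k) • β S) (g • β S') < Δ / 2 := by
  have hshift (l : ℤ) : g * w ^ k * w ^ (-(l + k)) = g * w ^ (-l) := by
    rw [mul_assoc, ← zpow_add]
    congr 2
    ring
  by_cases hl : ∃ l ∈ S', g * w ^ (-l) ∈ U
  · obtain ⟨l, hlS', hlU⟩ := hl
    have h₁ := hβ.dist_translate_lt S (g * w ^ k) (l + k) ((h l hlU).mpr hlS')
      (by rwa [hshift])
    have h₂ := hβ.dist_translate_lt S' g l hlS' hlU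
    rw [smul_smul _ _ x, hshift] at h₁
    rw [smul_smul] at h₂
    linarith [dist_triangle_right ((g * w ^ k) • β S) (g • β S') ((g * w ^ (-l)) • x)]
  · push Not at hl
    have h₁ := hβ.dist_base_lt S (g * w ^ k) fun l hlS hlU => by
      rw [← sub_add_cancel l k, hshift] at hlU
      exact hl (l - k) ((h _ hlU).mp (by rwa [sub_add_cancel])) hlU
    linarith [dist_triangle_right ((g * w ^ k) • β S) (g • β S') x₀, hβ.dist_base_lt S' g hl]

theorem zpow_smul_eq (hβ : GluedTranslates x₀ Δ x w U β) (hE : IsPointedExpansive G x₀ Δ) (k : ℤ)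
    (S : Set ℤ) : w ^ k • β S = β {l | l + k ∈ S} := by
  refine hE.eq_of_dist_le _ _ fun g => ?_
  rw [smul_smul]
  linarith [hβ.dist_smul_lt (k := k) (S := S) (S' := {l | l + k ∈ S}) (g := g) fun l _ => Iff.rfl,
    hE.pos]

theorem apply_empty (hβ : GluedTranslates x₀ Δ x w U β) (hE : IsPointedExpansive G x₀ Δ) :
    β ∅ = x₀ := by
  refine hE.eq_of_dist_le _ _ fun g => ?_
  rw [hE.smul_base]
  linarith [hβ.dist_base_lt ∅ g (by simp), hE.pos]

theorem supp_subset (hβ : GluedTranslates x₀ Δ x w U β) (S : Set ℤ) :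
    supp (β S) ⊆ U * (w ^ ·) '' S := by
  intro g hg
  by_contra hfar
  refine notMem_orbitSupp.mpr (hβ.dist_base_lt S g fun l hl hU => hfar ?_).le hg
  exact ⟨_, hU, _, ⟨l, hl, rfl⟩, by simp⟩

theorem finite_supp (hβ : GluedTranslates x₀ Δ x w U β) {S : Set ℤ} (hS : S.Finite) :
    (supp (β S)).Finite :=
  (hβ.finite.mul (hS.image _)).subset (hβ.supp_subset S)

theorem supp_subset_mul_zpowers (hβ : GluedTranslates x₀ Δ x w U β) (S : Set ℤ) :
    supp (β S) ⊆ U * Subgroup.zpowers w :=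
  (hβ.supp_subset S).trans <| Set.mul_subset_mul_left <| by
    rintro _ ⟨l, -, rfl⟩
    exact ⟨l, rfl⟩

variable [CompactSpace X] [ContinuousConstSMul G X]

theorem tendsto_apply (hβ : GluedTranslates x₀ Δ x w U β) (hE : IsPointedExpansive G x₀ Δ)
    {ι : Type*} {L : Filter ι} {S' : ι → Set ℤ} {S : Set ℤ}
    (h : ∀ l, ∀ᶠ n in L, (l ∈ S' n ↔ l ∈ S)) : Tendsto (fun n => β (S' n)) L (𝓝 (β S)) := by
  refine Metric.tendsto_nhds.mpr fun ε hε => ?_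
  obtain ⟨N, hN, hNε⟩ := hE.exists_finite_dist_lt hε
  have hagree : ∀ᶠ n in L, ∀ g ∈ N, ∀ l, g * w ^ (-l) ∈ U → (l ∈ S' n ↔ l ∈ S) := by
    refine (eventually_all_finite hN).mpr fun g _ => ?_
    have hfin : {l : ℤ | g * w ^ (-l) ∈ U}.Finite :=
      Set.Subsingleton.finite fun l hl l' hl' => hβ.unique g l l' hl hl'
    exact (eventually_all_finite hfin).mpr fun l _ => h l
  filter_upwards [hagree] with n hn
  refine hNε _ _ fun g hg => ?_
  have hlt := hβ.dist_smul_lt (k := 0) (S := S' n) (S' := S) (g := g) (by simpa using hn g hg)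
  rw [zpow_zero, mul_one] at hlt
  linarith [hE.pos]

theorem dist_iterate_lt (hβ : GluedTranslates x₀ Δ x (z ^ i) U β)
    (hE : IsPointedExpansive G x₀ Δ) (hf : IsAsympNilpotentEnd G x₀ f) (hz : ¬ IsOfFinOrder z)
    (τ : ℕ) {D : Set G} (hD : D.Finite) {ε : ℝ} (hε : 0 < ε) :
    ∃ r : ℤ, ∀ d ∈ D, ∀ (m : ℤ) (S S' : Set ℤ), (∀ l, |m - i * l| < r → (l ∈ S ↔ l ∈ S')) →
      dist ((d * z ^ m) • f^[τ] (β S)) ((d * z ^ m) • f^[τ] (β S')) < ε := by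
  obtain ⟨W, hW, hWε⟩ := hE.exists_iterate_window hf τ hε
  obtain ⟨r, -, hr⟩ := exists_abs_lt_of_mul_zpow_mem hz (hW.mul hD) hβ.finite
  refine ⟨r, fun d hd m S S' hSS' => hWε _ _ _ fun v hv => ?_⟩
  have hlt := hβ.dist_smul_lt (k := 0) (S := S) (S' := S') (g := v * (d * z ^ m)) fun l hl => by
    rw [add_zero]
    refine hSS' l (hr (v * d) (Set.mul_mem_mul hv hd) (m - i * l) ?_)
    rwa [← zpow_mul, mul_neg, ← mul_assoc, mul_assoc, ← zpow_add, ← sub_eq_add_neg] at hl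
  rw [zpow_zero, mul_one] at hlt
  linarith [hE.pos]

end GluedTranslates

theorem Glues.exists_gluedTranslates {N : Set G} (hN : N.Finite) (h1N : 1 ∈ N)
    (hglues : Glues x₀ Δ (Δ / 4) N) (hx : (supp x).Finite)
    (hunique : ∀ (g : G) (l l' : ℤ),
      g * w ^ (-l) ∈ N * supp x → g * w ^ (-l') ∈ N * supp x → l = l') :
    ∃ β, GluedTranslates x₀ Δ x w (N * supp x) β := by
  have hmem (g : G) (l : ℤ) :
      g ∈ N * supp (w ^ (-l) • x) ↔ g * w ^ (-l) ∈ N * supp x := by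
    rw [orbitSupp_smul, ← mul_assoc]
    simp
  have hglue (S : Set ℤ) := hglues S (fun l => w ^ (-(l : ℤ)) • x) fun l l' hne =>
    Set.disjoint_left.mpr fun g hl hl' =>
      hne (Subtype.ext (hunique g l l' ((hmem g l).mp hl) ((hmem g l').mp hl')))
  choose β hβ hβ₀ using hglue
  refine ⟨β, hN.mul hx, Set.subset_mul_right _ h1N, hunique, fun S g l hl hg => ?_,
    fun S g hg => ?_⟩
  · refine hβ S ⟨l, hl⟩ g fun l' hne hl' => hne (Subtype.ext ?_)
    exact hunique g l' l ((hmem g l').mp hl') hg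
  · exact hβ₀ S g fun l hl => hg l l.2 ((hmem g l).mp hl)

variable [CompactSpace X] [ContinuousConstSMul G X]

theorem GluedTranslates.exists_dist_lt (hE : IsPointedExpansive G x₀ Δ) (hz : ¬ IsOfFinOrder z)
    (hU : U.Finite) {ρ : ℝ} (hρ : 0 < ρ) :
    ∃ r : ℤ, ∀ i ≥ r, ∀ β, GluedTranslates x₀ Δ x (z ^ i) U β → ∀ S, 0 ∈ S → dist (β S) x < ρ := by
  obtain ⟨P, hP, hPρ⟩ := hE.exists_finite_dist_lt hρ
  obtain ⟨r, hr, hfar⟩ := exists_abs_lt_of_mul_zpow_mem hz hP hU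
  refine ⟨r, fun i hi β hβ S hS => hPρ _ _ fun g hg => ?_⟩
  have hΔ := hE.pos
  by_cases hgU : g ∈ U
  · have hlt := hβ.dist_translate_lt S g 0 hS (by simpa using hgU)
    simp only [neg_zero, zpow_zero, one_smul] at hlt
    linarith
  · have hx : dist (g • x) x₀ ≤ Δ / 4 :=
      notMem_orbitSupp.mp fun hmem => hgU (hβ.orbitSupp_subset hmem)
    have hlt := hβ.dist_base_lt S g fun l _ hl => by
      rw [← zpow_mul] at hl
      rcases eq_or_ne l 0 with rfl | hl0
      · exact hgU (by simpa using hl)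
      · have habs := hfar g hg _ hl
        rw [abs_mul, abs_neg] at habs
        nlinarith [Int.one_le_abs hl0, le_abs_self i]
    linarith [dist_triangle_right (g • β S) (g • x) x₀]

theorem IsGluing.exists_gluedTranslates (hG : IsGluing G x₀ Δ) (hz : ¬ IsOfFinOrder z) :
    ∃ N : Set G, N.Finite ∧ ∀ x : X, (supp x).Finite → ∀ ρ > 0, ∃ i : ℤ, 1 ≤ i ∧ ∃ β,
      GluedTranslates x₀ Δ x (z ^ i) (N * supp x) β ∧ ∀ S, 0 ∈ S → dist (β S) x < ρ := by
  have hΔ := hG.pos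
  obtain ⟨N, hN, h1N, hglues⟩ := hG.exists_glues (show 0 < Δ / 4 by positivity)
  refine ⟨N, hN, fun x hx ρ hρ => ?_⟩
  have hU : (N * supp x).Finite := hN.mul hx
  obtain ⟨r₁, hr₁, hsep⟩ := exists_abs_lt_of_mul_zpow_mem hz hU hU
  obtain ⟨r₂, hclose⟩ := GluedTranslates.exists_dist_lt (x := x) hG.toIsPointedExpansive hz hU hρ
  have hr₁i : r₁ ≤ max r₁ r₂ := le_max_left _ _
  obtain ⟨β, hβ⟩ := hglues.exists_gluedTranslates (w := z ^ max r₁ r₂) hN h1N hx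
    fun g l l' hl hl' => by
      have habs := hsep _ hl (max r₁ r₂ * (l - l')) <| by
        rw [mul_assoc, ← zpow_mul, ← zpow_add]
        convert hl' using 2
        rw [← zpow_mul]
        congr 1
        ring
      by_contra hne
      rw [abs_mul] at habs
      nlinarith [Int.one_le_abs (sub_ne_zero.mpr hne), le_abs_self (max r₁ r₂)]
  exact ⟨_, by omega, β, hβ, hclose _ (le_max_right _ _) β hβ⟩

end GluedTranslates

section CentralElement

/-- Mortality of the points which are periodic under a power of `z` and finitely supported modulo
it. These points form a system over `G ⧸ zpowers (z ^ i)`. -/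
def PeriodicMortal (G : Type*) {X : Type*} [Group G] [MetricSpace X] [MulAction G X] (x₀ : X)
    (Δ : ℝ) (f : X → X) (z : G) : Prop :=
  ∀ i : ℤ, 1 ≤ i → ∀ x : X, z ^ i • x = x → ∀ F : Set G, F.Finite →
    orbitSupp G x₀ Δ x ⊆ F * Subgroup.zpowers (z ^ i) → Mortal x₀ f x

/-- The exponents of the powers of `z` at which the columns `d * zpowers z`, `d ∈ D`, meet `S`. -/
def heights {G : Type*} [Group G] (D : Set G) (z : G) (S : Set G) : Set ℤ :=
  {m | ∃ d ∈ D, d * z ^ m ∈ S}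

theorem subset_mul_image_heights {G : Type*} [Group G] {D : Set G} {z : G} {S : Set G}
    (hS : S ⊆ D * Subgroup.zpowers z) : S ⊆ D * (z ^ ·) '' heights D z S := by
  intro g hg
  obtain ⟨d, hd, _, ⟨m, rfl⟩, rfl⟩ := hS hg
  exact ⟨d, hd, z ^ m, ⟨m, ⟨d, hd, hg⟩, rfl⟩, rfl⟩

theorem exists_abs_sub_lt_of_mem_heights {G : Type*} [Group G] {z : G} (hz : ¬ IsOfFinOrder z)
    {D R : Set G} (hD : D.Finite) (hR : R.Finite) :
    ∃ r : ℤ, 0 < r ∧ ∀ S S' : Set G, S' ⊆ D * Subgroup.zpowers z → S ⊆ R * S' →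
      ∀ m ∈ heights D z S, ∃ m' ∈ heights D z S', |m - m'| < r := by
  obtain ⟨r, hr, hlt⟩ := exists_abs_lt_of_mul_zpow_mem hz hD (hR.mul hD)
  refine ⟨r, hr, fun S S' hS' hS m hm => ?_⟩
  obtain ⟨d, hd, hmem⟩ := hm
  obtain ⟨a, ha, s, hs, heq⟩ := hS hmem
  obtain ⟨d', hd', _, ⟨m', rfl⟩, rfl⟩ := hS' hs
  refine ⟨m', ⟨d', hd', hs⟩, hlt d hd _ ⟨a, ha, d', hd', ?_⟩⟩
  rw [sub_eq_add_neg, zpow_add, ← mul_assoc, ← heq]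
  simp [mul_assoc]

theorem subset_Ioo_of_barriers {H : ℕ → Set ℤ} {r c c' : ℤ}
    (hstep : ∀ k, ∀ m ∈ H (k + 1), ∃ m' ∈ H k, |m - m'| < r)
    (hc : ∀ k, ∀ m ∈ H k, r < |m - c|) (hc' : ∀ k, ∀ m ∈ H k, r < |m - c'|)
    (h₀ : H 0 ⊆ Set.Ioo c c') (k : ℕ) : H k ⊆ Set.Ioo c c' := by
  induction k with
  | zero => exact h₀
  | succ k ih =>
    intro m hm
    obtain ⟨m', hm', hlt⟩ := hstep k m hm
    obtain ⟨h₁, h₂⟩ := ih hm'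
    have hb := hc k m' hm'
    have hb' := hc' k m' hm'
    rw [abs_of_pos (by omega)] at hb
    rw [abs_of_neg (by omega)] at hb'
    rw [abs_lt] at hlt
    exact ⟨by omega, by omega⟩

theorem normal_zpowers_of_forall_commute {G : Type*} [Group G] {z : G}
    (hz : ∀ g, Commute g z) : (Subgroup.zpowers z).Normal := by
  refine ⟨?_⟩
  rintro _ ⟨m, rfl⟩ g
  exact ⟨m, by simp [((hz g).zpow_right m).eq]⟩

variable {G X : Type*} [Group G] [MetricSpace X] [MulAction G X] {x₀ : X} {Δ : ℝ} {f : X → X}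
  {x : X} {w z : G} {i r : ℤ} {D U : Set G} {T : ℕ} {β : Set ℤ → X}

local notation "supp" => orbitSupp G x₀ Δ

theorem GluedTranslates.mortal_univ (hβ : GluedTranslates x₀ Δ x (z ^ i) U β)
    (hE : IsPointedExpansive G x₀ Δ) (hper : PeriodicMortal G x₀ Δ f z) (hi : 1 ≤ i) :
    Mortal x₀ f (β Set.univ) := by
  refine hper i hi _ ?_ U hβ.finite (hβ.supp_subset_mul_zpowers _)
  simpa using hβ.zpow_smul_eq hE 1 Set.univ

/-- Over a central element `z`, the glued translates of a point along `z ^ i` evolve inside finitely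
many columns `d * zpowers z`, keep away from the heights of the translates they are made of, and
move with bounded speed in the direction of `z`. -/
structure IsBarrierFamily (x₀ : X) (Δ : ℝ) (f : X → X) (z : G) (i : ℤ) (D : Set G) (r : ℤ) (T : ℕ)
    (β : Set ℤ → X) : Prop where
  finite : D.Finite
  supp_subset : ∀ S, ∀ t ≥ T, orbitSupp G x₀ Δ (f^[t] (β S)) ⊆ D * Subgroup.zpowers z
  lt_abs : ∀ S, ∀ t ≥ T, ∀ m ∈ heights D z (orbitSupp G x₀ Δ (f^[t] (β S))), ∀ j ∈ S,
    r < |m - i * j|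
  step : ∀ S, ∀ t ≥ T, ∀ m ∈ heights D z (orbitSupp G x₀ Δ (f^[t + 1] (β S))),
    ∃ m' ∈ heights D z (orbitSupp G x₀ Δ (f^[t] (β S))), |m - m'| < r

namespace IsBarrierFamily

theorem supp_iterate_subset (hb : IsBarrierFamily x₀ Δ f z i D r T β) {S I : Set ℤ} {t : ℕ}
    (ht : T ≤ t) (h : heights D z (supp (f^[t] (β S))) ⊆ I) :
    supp (f^[t] (β S)) ⊆ D * (z ^ ·) '' I :=
  (subset_mul_image_heights (hb.supp_subset S t ht)).trans
    (Set.mul_subset_mul_left (Set.image_mono h))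

theorem heights_iterate_subset_Ioo (hb : IsBarrierFamily x₀ Δ f z i D r T β) {S : Set ℤ}
    {j j' : ℤ} (hj : j ∈ S) (hj' : j' ∈ S) {t₀ : ℕ} (ht₀ : T ≤ t₀)
    (h : heights D z (supp (f^[t₀] (β S))) ⊆ Set.Ioo (i * j) (i * j')) :
    ∀ t ≥ t₀, heights D z (supp (f^[t] (β S))) ⊆ Set.Ioo (i * j) (i * j') := by
  intro t ht
  obtain ⟨k, rfl⟩ := Nat.exists_eq_add_of_le ht
  have hTk (k : ℕ) : T ≤ t₀ + k := ht₀.trans (t₀.le_add_right k)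
  exact subset_Ioo_of_barriers (H := fun k => heights D z (supp (f^[t₀ + k] (β S))))
    (fun k => hb.step S _ (hTk k)) (fun k m hm => hb.lt_abs S _ (hTk k) m hm j hj)
    (fun k m hm => hb.lt_abs S _ (hTk k) m hm j' hj') h k

end IsBarrierFamily

variable [ContinuousConstSMul G X]

theorem IsAsympNilpotentEnd.eventually_mem_supp_iterate (hf : IsAsympNilpotentEnd G x₀ f)
    {ι : Type*} {L : Filter ι} {y : ι → X} {y₀ : X} (hy : Tendsto y L (𝓝 y₀)) {t : ℕ} {g : G}
    (hg : g ∈ supp (f^[t] y₀)) : ∀ᶠ n in L, g ∈ supp (f^[t] (y n)) := by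
  have hlim := (((hf.continuous.iterate t).tendsto y₀).comp hy).const_smul g
  exact (hlim.dist tendsto_const_nhds).eventually_const_lt hg

theorem IsAsympNilpotentEnd.eventually_mem_heights (hf : IsAsympNilpotentEnd G x₀ f) {ι : Type*}
    {L : Filter ι} {y : ι → X} {y₀ : X} (hy : Tendsto y L (𝓝 y₀)) {t : ℕ} {m : ℤ}
    (hm : m ∈ heights D z (supp (f^[t] y₀))) :
    ∀ᶠ n in L, m ∈ heights D z (supp (f^[t] (y n))) := by
  obtain ⟨d, hd, hmem⟩ := hm
  exact (hf.eventually_mem_supp_iterate hy hmem).mono fun n hn => ⟨d, hd, hn⟩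

namespace IsBarrierFamily

theorem mortal_of_heights_subset (hb : IsBarrierFamily x₀ Δ f z i D r T β)
    (hE : IsPointedExpansive G x₀ Δ) (hf : IsAsympNilpotentEnd G x₀ f) {S I : Set ℤ}
    (hI : I.Finite) {T' : ℕ} (h : ∀ t ≥ T', heights D z (supp (f^[t] (β S))) ⊆ I) :
    Mortal x₀ f (β S) :=
  hE.mortal_of_supp_iterate_subset hf (T := max T T') (hb.finite.mul (hI.image (z ^ ·)))
    fun t ht => hb.supp_iterate_subset (le_of_max_le_left ht) (h t (le_of_max_le_right ht))

end IsBarrierFamily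

variable [CompactSpace X]

theorem GluedTranslates.tendsto_inter_Icc (hβ : GluedTranslates x₀ Δ x w U β)
    (hE : IsPointedExpansive G x₀ Δ) (S : Set ℤ) :
    Tendsto (fun n : ℕ => β (S ∩ Set.Icc (-(n : ℤ)) n)) atTop (𝓝 (β S)) := by
  refine hβ.tendsto_apply hE fun l => ?_
  filter_upwards [eventually_ge_atTop l.natAbs] with n hn
  simp only [Set.mem_inter_iff, Set.mem_Icc, and_iff_left_iff_imp]
  omega

theorem GluedTranslates.exists_abs_lt_of_mem_heights (hβ : GluedTranslates x₀ Δ x (z ^ i) U β)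
    (hE : IsPointedExpansive G x₀ Δ) (hf : IsAsympNilpotentEnd G x₀ f) (hz : ¬ IsOfFinOrder z)
    (hD : D.Finite) (τ : ℕ) :
    ∃ r : ℤ, 0 ≤ r ∧ ∀ S S', f^[τ] (β S') = x₀ → ∀ m ∈ heights D z (supp (f^[τ] (β S))),
      ∃ l, |m - i * l| < r ∧ ¬ (l ∈ S ↔ l ∈ S') := by
  have hΔ := hE.pos
  obtain ⟨r, hlt⟩ := hβ.dist_iterate_lt hE hf hz τ hD (show 0 < Δ / 4 by positivity)
  refine ⟨|r|, abs_nonneg r, fun S S' hS' m ⟨d, hd, hm⟩ => ?_⟩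
  by_contra! hagree
  have hclose := hlt d hd m S S' fun l hl => hagree l (hl.trans_le (le_abs_self r))
  rw [hS', hE.smul_base] at hclose
  exact notMem_orbitSupp.mpr hclose.le hm

namespace IsBarrierFamily

/- The rays `Iic a` and `Ici b` look like everything outside the gap and like nothing inside it, and
both kinds of points have died out by the time `T₁`. -/
theorem exists_heights_rays_subset (hb : IsBarrierFamily x₀ Δ f z i D r T β)
    (hβ : GluedTranslates x₀ Δ x (z ^ i) U β) (hE : IsPointedExpansive G x₀ Δ)
    (hf : IsAsympNilpotentEnd G x₀ f) (hz : ¬ IsOfFinOrder z) (hi : 1 ≤ i)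
    (huniv : Mortal x₀ f (β Set.univ)) :
    ∃ T₁ ≥ T, ∃ q : ℤ, 0 ≤ q ∧ ∀ a b : ℤ,
      (∀ t ≥ T₁, heights D z (supp (f^[t] (β (Set.Iic a ∪ Set.Ici b)))) ⊆
        Set.Ioo (i * (a - q)) (i * (b + q))) ∧
      ∀ m ∈ heights D z (supp (f^[T₁] (β (Set.Iic a ∪ Set.Ici b)))),
        m < i * a + q ∨ i * b - q < m := by
  obtain ⟨n, hn⟩ := huniv
  set T₁ := max T n
  have huniv : f^[T₁] (β Set.univ) = x₀ := hf.iterate_eq_base_of_le hn (le_max_right _ _)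
  have hempty : f^[T₁] (β ∅) = x₀ := by rw [hβ.apply_empty hE, hf.iterate_base]
  obtain ⟨q, hq₀, hq⟩ := hβ.exists_abs_lt_of_mem_heights hE hf hz hb.finite T₁
  refine ⟨T₁, le_max_left _ _, q, hq₀, fun a b => ⟨?_, fun m hm => ?_⟩⟩
  · refine hb.heights_iterate_subset_Ioo (Or.inl (Set.mem_Iic.mpr (by omega)))
      (Or.inr (Set.mem_Ici.mpr (by omega))) (le_max_left _ _) fun m hm => ?_
    obtain ⟨l, hl, hlP⟩ := hq _ Set.univ huniv m hm
    simp only [Set.mem_union, Set.mem_Iic, Set.mem_Ici, Set.mem_univ, iff_true, not_or,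
      not_le] at hlP
    rw [abs_lt] at hl
    constructor <;> nlinarith
  · obtain ⟨l, hl, hlP⟩ := hq _ ∅ hempty m hm
    simp only [Set.mem_union, Set.mem_Iic, Set.mem_Ici, Set.mem_empty_iff_false, iff_false,
      not_not] at hlP
    rw [abs_lt] at hl
    exact hlP.imp (fun h => by nlinarith) (fun h => by nlinarith)

/- The two rays survive only near their end points at some time. Barriers stop the outward motion
from there, and the growth of mortal finitely supported points bounds the inward motion. -/
theorem exists_abs_lt_of_mem_heights_rays (hb : IsBarrierFamily x₀ Δ f z i D r T β)
    (hβ : GluedTranslates x₀ Δ x (z ^ i) U β) (hG : IsGluing G x₀ Δ)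
    (hf : IsAsympNilpotentEnd G x₀ f) (hz : ¬ IsOfFinOrder z) (hi : 1 ≤ i)
    (huniv : Mortal x₀ f (β Set.univ)) :
    ∃ (K : ℤ) (T' : ℕ), ∀ a b : ℤ, ∀ t ≥ T',
      ∀ m ∈ heights D z (supp (f^[t] (β (Set.Iic a ∪ Set.Ici b)))),
        |m - i * a| < K ∨ |m - i * b| < K := by
  have hE := hG.toIsPointedExpansive
  obtain ⟨T₁, hT₁, q, hq₀, hrays⟩ := hb.exists_heights_rays_subset hβ hE hf hz hi huniv
  obtain ⟨R, hR, T₂, hgrowth⟩ := hG.exists_supp_iterate_subset_of_mem_closure hf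
  obtain ⟨s, -, hs⟩ := exists_abs_sub_lt_of_mem_heights hz hb.finite hR
  refine ⟨i * q + q + s, T₂ + T₁, fun a b t ht m hm => ?_⟩
  obtain ⟨houter, hinner⟩ := hrays a b
  have hmortal : Mortal x₀ f (β (Set.Iic a ∪ Set.Ici b)) :=
    hb.mortal_of_heights_subset hE hf (Set.finite_Ioo _ _) houter
  have hsupp := hgrowth _ (subset_closure ⟨hf.mortal_iterate hmortal T₁,
    (hb.finite.mul ((Set.finite_Ioo _ _).image _)).subset
      (hb.supp_iterate_subset hT₁ (houter T₁ le_rfl))⟩) (t - T₁)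
    (by omega)
  rw [← Function.iterate_add_apply, Nat.sub_add_cancel (by omega)] at hsupp
  obtain ⟨m', hm', hmm'⟩ := hs _ _ (hb.supp_subset _ T₁ hT₁) hsupp m hm
  obtain ⟨hlo, hhi⟩ := houter t (by omega) hm
  simp only [abs_lt] at hmm' ⊢
  have hiq : 0 ≤ i * q := by positivity
  exact (hinner m' hm').imp (fun h => by constructor <;> linarith)
    (fun h => by constructor <;> linarith)

theorem mortal_rays (hb : IsBarrierFamily x₀ Δ f z i D r T β)
    (hβ : GluedTranslates x₀ Δ x (z ^ i) U β) (hG : IsGluing G x₀ Δ)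
    (hf : IsAsympNilpotentEnd G x₀ f) (hz : ¬ IsOfFinOrder z) (hi : 1 ≤ i)
    (huniv : Mortal x₀ f (β Set.univ)) :
    Mortal x₀ f (β (Set.Iic 0)) ∧ Mortal x₀ f (β (Set.Ici 0)) := by
  have hE := hG.toIsPointedExpansive
  obtain ⟨K, T', hK⟩ := hb.exists_abs_lt_of_mem_heights_rays hβ hG hf hz hi huniv
  have hfar (m : ℤ) : ∀ᶠ n : ℕ in atTop, K ≤ |m - i * n| ∧ K ≤ |m - i * -n| := by
    filter_upwards [eventually_ge_atTop (K.natAbs + m.natAbs)] with n hn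
    have hin : (n : ℤ) ≤ i * n := le_mul_of_one_le_left (by positivity) hi
    exact ⟨by rw [abs_sub_comm]; exact le_abs.mpr (Or.inl (by omega)),
      le_abs.mpr (Or.inl (by rw [mul_neg]; omega))⟩
  have hmortal {S : Set ℤ} {S' : ℕ → Set ℤ} (hS : ∀ l, ∀ᶠ n in atTop, (l ∈ S' n ↔ l ∈ S))
      (hK' : ∀ t ≥ T', ∀ m, ∀ᶠ n in atTop,
        m ∈ heights D z (supp (f^[t] (β (S' n)))) → |m| < K) :
      Mortal x₀ f (β S) := by
    refine hb.mortal_of_heights_subset hE hf (Set.finite_Ioo (-K) K) (T' := T') fun t ht m hm => ?_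
    obtain ⟨n, hmem, hn⟩ :=
      ((hf.eventually_mem_heights (hβ.tendsto_apply hE hS) hm).and (hK' t ht m)).exists
    exact abs_lt.mp (hn hmem)
  constructor
  · refine hmortal (S' := fun n => Set.Iic 0 ∪ Set.Ici (n : ℤ)) (fun l => ?_) fun t ht m => ?_
    · filter_upwards [eventually_gt_atTop l.natAbs] with n hn
      simp only [Set.mem_union, Set.mem_Iic, Set.mem_Ici]
      omega
    · filter_upwards [hfar m] with n hn hm
      simpa only [mul_zero, sub_zero, hn.1.not_gt, or_false] using hK 0 n t ht m hm
  · refine hmortal (S' := fun n => Set.Iic (-(n : ℤ)) ∪ Set.Ici 0) (fun l => ?_) fun t ht m => ?_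
    · filter_upwards [eventually_gt_atTop l.natAbs] with n hn
      simp only [Set.mem_union, Set.mem_Iic, Set.mem_Ici]
      omega
    · filter_upwards [hfar m] with n hn hm
      simpa only [mul_zero, sub_zero, hn.2.not_gt, false_or] using hK (-n) 0 t ht m hm

theorem exists_mortal_Icc (hb : IsBarrierFamily x₀ Δ f z i D r T β)
    (hβ : GluedTranslates x₀ Δ x (z ^ i) U β) (hG : IsGluing G x₀ Δ)
    (hf : IsAsympNilpotentEnd G x₀ f) (hz : ¬ IsOfFinOrder z) (hi : 1 ≤ i)
    (huniv : Mortal x₀ f (β Set.univ)) :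
    ∃ M : ℤ, 0 ≤ M ∧ Mortal x₀ f (β (Set.Icc (-M) M)) := by
  have hE := hG.toIsPointedExpansive
  obtain ⟨⟨n₁, hn₁⟩, n₂, hn₂⟩ := hb.mortal_rays hβ hG hf hz hi huniv
  set τ := max T (max n₁ n₂)
  obtain ⟨M, hM, hlocal⟩ := hβ.exists_abs_lt_of_mem_heights hE hf hz hb.finite τ
  have hIic : f^[τ] (β (Set.Iic M)) = x₀ := by
    have hshift : (z ^ i) ^ (-M) • β (Set.Iic 0) = β (Set.Iic M) := by
      rw [hβ.zpow_smul_eq hE]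
      congr 1
      ext l
      simp
    rw [← hshift, hf.iterate_smul, hf.iterate_eq_base_of_le hn₁ (by omega), hE.smul_base]
  have hIci : f^[τ] (β (Set.Ici (-M))) = x₀ := by
    have hshift : (z ^ i) ^ M • β (Set.Ici 0) = β (Set.Ici (-M)) := by
      rw [hβ.zpow_smul_eq hE]
      congr 1
      ext l
      simp [neg_le_iff_add_nonneg]
    rw [← hshift, hf.iterate_smul, hf.iterate_eq_base_of_le hn₂ (by omega), hE.smul_base]
  refine ⟨M, hM, τ, hE.eq_of_dist_le _ _ fun g => ?_⟩
  rw [hE.smul_base]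
  suffices hg : g ∉ supp (f^[τ] (β (Set.Icc (-M) M))) by
    linarith [notMem_orbitSupp.mp hg, hE.pos]
  intro hg
  obtain ⟨_, _, _, ⟨m, hm, rfl⟩, rfl⟩ := hb.supp_iterate_subset (le_max_left _ _) subset_rfl hg
  obtain ⟨l, hl, hlIcc⟩ := hlocal _ _ hIic m hm
  obtain ⟨l', hl', hlIcc'⟩ := hlocal _ _ hIci m hm
  simp only [Set.mem_Icc, Set.mem_Iic, Set.mem_Ici] at hlIcc hlIcc'
  have hlM : l < -M := by omega
  have hlM' : M < l' := by omega
  rw [abs_lt] at hl hl'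
  nlinarith

end IsBarrierFamily

end CentralElement

section CentralStep

theorem mul_normal_mul_mul_normal {G : Type*} [Group G] (R S : Set G) (B : Subgroup G)
    [B.Normal] : R * (B : Set G) * (S * B) = R * S * B := by
  rw [Subgroup.set_mul_normal_comm S B, mul_assoc, ← mul_assoc (B : Set G), coe_mul_coe,
    ← Subgroup.set_mul_normal_comm, mul_assoc]

variable {G X : Type*} [Group G] [MetricSpace X] [MulAction G X] {x₀ : X} {Δ : ℝ} {f : X → X}
  {x : X} {z : G} {i r : ℤ} {D U : Set G} {T : ℕ} {β : Set ℤ → X}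

local notation "supp" => orbitSupp G x₀ Δ

theorem sub_mem_heights_orbitSupp_smul (k m : ℤ) (y : X) :
    m - k ∈ heights D z (supp (z ^ k • y)) ↔ m ∈ heights D z (supp y) := by
  simp [heights, orbitSupp, smul_smul, mul_assoc, ← zpow_add]

variable [CompactSpace X] [ContinuousConstSMul G X]

theorem IsGluing.exists_supp_iterate_subset_mul_zpowers (hG : IsGluing G x₀ Δ)
    (hf : IsAsympNilpotentEnd G x₀ f) (hzc : ∀ g, Commute g z) (hz : ¬ IsOfFinOrder z)
    (hper : PeriodicMortal G x₀ Δ f z) :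
    ∃ R : Set G, R.Finite ∧ ∃ T : ℕ, ∀ x : X, (supp x).Finite →
      ∀ t ≥ T, supp (f^[t] x) ⊆ R * Subgroup.zpowers z * supp x := by
  have hE := hG.toIsPointedExpansive
  have := normal_zpowers_of_forall_commute hzc
  set B := Subgroup.zpowers z
  obtain ⟨R, hR, T, hgrowth⟩ := hG.exists_supp_iterate_subset_mul hf B
  obtain ⟨N, hN, hglue⟩ := hG.exists_gluedTranslates hz
  refine ⟨R * N, hR.mul hN, T, fun x hx t ht g hg => ?_⟩
  obtain ⟨ρ, hρ, hnear⟩ :=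
    Metric.eventually_nhds_iff.mp (hf.eventually_mem_supp_iterate tendsto_id hg)
  obtain ⟨i, hi, β, hβ, hclose⟩ := hglue x hx ρ hρ
  have hsupp : supp (β Set.univ) ⊆ N * supp x * B :=
    (hβ.supp_subset_mul_zpowers _).trans <| Set.mul_subset_mul_left <|
      Subgroup.zpowers_le.mpr (Subgroup.zpow_mem_zpowers z i)
  have hmem := hgrowth _ _ hβ.finite (hβ.mortal_univ hE hper hi) hsupp t ht
    (hnear (hclose Set.univ trivial))
  have hprod : R * (B : Set G) * (N * supp x * B) = R * N * B * supp x := by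
    rw [mul_normal_mul_mul_normal, ← mul_assoc R, mul_assoc _ (supp x),
      Subgroup.set_mul_normal_comm]
    simp only [mul_assoc]
  exact hprod ▸ Set.mul_subset_mul_left hsupp hmem

theorem GluedTranslates.isBarrierFamily (hβ : GluedTranslates x₀ Δ x (z ^ i) U β)
    (hE : IsPointedExpansive G x₀ Δ) (hf : IsAsympNilpotentEnd G x₀ f) (hD : D.Finite)
    (hcolumns : ∀ S, S.Finite → ∀ t ≥ T, supp (f^[t] (β S)) ⊆ D * Subgroup.zpowers z)
    (hdecay : ∀ S, S.Finite → 0 ∈ S → ∀ t ≥ T, ∀ m ∈ heights D z (supp (f^[t] (β S))), r < |m|)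
    (hstep : ∀ y, supp y ⊆ D * Subgroup.zpowers z →
      ∀ m ∈ heights D z (supp (f y)), ∃ m' ∈ heights D z (supp y), |m - m'| < r) :
    IsBarrierFamily x₀ Δ f z i D r T β := by
  have hfin (S : Set ℤ) (n : ℕ) : (S ∩ Set.Icc (-(n : ℤ)) n).Finite :=
    (Set.finite_Icc _ _).inter_of_right S
  have hsupp : ∀ S, ∀ t ≥ T, supp (f^[t] (β S)) ⊆ D * Subgroup.zpowers z := by
    intro S t ht g hg
    obtain ⟨n, hn⟩ := (hf.eventually_mem_supp_iterate (hβ.tendsto_inter_Icc hE S) hg).exists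
    exact hcolumns _ (hfin S n) t ht hn
  refine ⟨hD, hsupp, fun S t ht m hm j hj => ?_, fun S t ht => ?_⟩
  · set S' : Set ℤ := {l | l + j ∈ S}
    have hm' : m - i * j ∈ heights D z (supp (f^[t] (β S'))) := by
      rw [← hβ.zpow_smul_eq hE, ← zpow_mul, hf.iterate_smul]
      exact (sub_mem_heights_orbitSupp_smul _ _ _).mpr hm
    obtain ⟨n, hn⟩ := (hf.eventually_mem_heights (hβ.tendsto_inter_Icc hE S') hm').exists
    exact hdecay _ (hfin S' n) ⟨by simpa [S'] using hj, by simp⟩ t ht _ hn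
  · rw [Function.iterate_succ_apply']
    exact hstep _ (hsupp S t ht)

/-- Unlike an inclusion of supports, a bound strictly below `Δ / 4` is inherited by the glued
translates. -/
theorem IsGluing.exists_gluedTranslates_dist_le (hG : IsGluing G x₀ Δ) (hz : ¬ IsOfFinOrder z)
    {b : X} (hb : (supp b).Finite) {c : ℝ} (hc : c < Δ / 4)
    (hbD : ∀ g ∉ D * (Subgroup.zpowers z : Set G), dist (g • b) x₀ ≤ c) {ρ : ℝ} (hρ : 0 < ρ) :
    ∃ (i : ℤ) (U : Set G) (β : Set ℤ → X), 1 ≤ i ∧ GluedTranslates x₀ Δ b (z ^ i) U β ∧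
      (∀ S, 0 ∈ S → dist (β S) b < ρ) ∧
      ∃ c' < Δ / 4, ∀ S, ∀ g ∉ D * (Subgroup.zpowers z : Set G), dist (g • β S) x₀ ≤ c' := by
  have hΔ := hG.pos
  have hE := hG.toIsPointedExpansive
  obtain ⟨N, hN, hglue⟩ := hG.exists_gluedTranslates hz
  obtain ⟨M, hM, hMlt⟩ := hE.exists_finite_dist_base_lt (show 0 < Δ / 8 by positivity)
  have hK : (M * (N * supp b)).Finite := hM.mul (hN.mul hb)
  have hcont : ∀ᶠ y in 𝓝 b, ∀ k ∈ M * (N * supp b), dist (k • y) (k • b) < (Δ / 4 - c) / 2 :=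
    (eventually_all_finite hK).mpr fun k _ =>
      Metric.tendsto_nhds.mp ((continuous_const_smul k).tendsto b) _ (by linarith)
  obtain ⟨θ, hθ, hclose⟩ := Metric.eventually_nhds_iff.mp hcont
  obtain ⟨i, hi, β, hβ, hdist⟩ := hglue b hb (min ρ θ) (lt_min hρ hθ)
  refine ⟨i, _, β, hi, hβ, fun S hS => (hdist S hS).trans_le (min_le_left _ _),
    max ((Δ / 4 + c) / 2) (Δ / 8), max_lt (by linarith) (by linarith), fun S g hg => ?_⟩
  by_cases hgS : g ∈ M * supp (β S)
  · obtain ⟨m, hm, s, hs, hms : m * s = g⟩ := hgS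
    obtain ⟨u, hu, _, ⟨l, hl, rfl⟩, hus : u * (z ^ i) ^ l = s⟩ := hβ.supp_subset S hs
    have hg_eq : g = m * u * (z ^ i) ^ l := by rw [← hms, ← hus, mul_assoc]
    have hshift : dist ((z ^ i) ^ l • β S) b < θ := by
      rw [hβ.zpow_smul_eq hE]
      exact (hdist _ (by simpa using hl)).trans_le (min_le_right _ _)
    have hlt : dist (g • β S) ((m * u) • b) < (Δ / 4 - c) / 2 := by
      rw [hg_eq, ← smul_smul]
      exact hclose hshift (m * u) (Set.mul_mem_mul hm hu)
    have hle := hbD (m * u) fun ⟨d, hd, v, hv, (hdv : d * v = m * u)⟩ => hg <| by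
      rw [hg_eq, ← hdv, mul_assoc]
      exact Set.mul_mem_mul hd (mul_mem hv (zpow_mem (Subgroup.zpow_mem_zpowers z i) l))
    have htri := dist_triangle (g • β S) ((m * u) • b) x₀
    exact le_max_of_le_left (by linarith)
  · exact le_max_of_le_right (hMlt _ _ hgS).le

theorem IsGluing.exists_isBarrierFamily_dist_lt (hG : IsGluing G x₀ Δ)
    (hf : IsAsympNilpotentEnd G x₀ f) (hzc : ∀ g, Commute g z) (hz : ¬ IsOfFinOrder z)
    (hper : PeriodicMortal G x₀ Δ f z) {q : X} (hq : (supp q).Finite) {ε : ℝ} (hε : 0 < ε) :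
    ∃ (i : ℤ) (b : X) (D U : Set G) (r : ℤ) (T : ℕ) (β : Set ℤ → X), 1 ≤ i ∧
      GluedTranslates x₀ Δ b (z ^ i) U β ∧ IsBarrierFamily x₀ Δ f z i D r T β ∧
      ∀ S, 0 ∈ S → dist (β S) q < ε := by
  have hΔ := hG.pos
  have hE := hG.toIsPointedExpansive
  obtain ⟨M, hM, hMlt⟩ := hE.exists_finite_dist_base_lt (show 0 < Δ / 8 by positivity)
  obtain ⟨R, hR, T, hgrowth⟩ := hG.exists_supp_iterate_subset_mul_zpowers hf hzc hz hper
  obtain ⟨V, hV, hVstep⟩ := hE.exists_supp_iterate_subset hf 1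
  have := normal_zpowers_of_forall_commute hzc
  set B := Subgroup.zpowers z
  set D := M * supp q
  have hRD : (R * D).Finite := hR.mul (hM.mul hq)
  obtain ⟨r, -, hstep⟩ := exists_abs_sub_lt_of_mem_heights hz hRD hV
  set C : Set X := {x | (supp x).Finite ∧
    (∃ c < Δ / 4, ∀ g ∉ D * (B : Set G), dist (g • x) x₀ ≤ c) ∧ dist x q < ε}
  have hqC : q ∈ C := by
    refine ⟨hq, ⟨Δ / 8, by linarith, fun g hg => (hMlt q g fun hgD => hg ?_).le⟩, by simpa⟩
    exact ⟨g, hgD, 1, one_mem _, mul_one g⟩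
  obtain ⟨b, ⟨hb, ⟨c, hc, hbD⟩, hbq⟩, ρ, hρ, n, hn⟩ := hE.exists_uniform_decay hf ⟨q, hqC⟩
    (hRD.mul ((Set.finite_Icc (-r) r).image (z ^ ·))) (show 0 < Δ / 4 by positivity)
  obtain ⟨i, U, β, hi, hβ, hclose, c', hc', hoff⟩ :=
    hG.exists_gluedTranslates_dist_le hz hb hc hbD (lt_min hρ (sub_pos.mpr hbq))
  have hβq (S : Set ℤ) (h0 : 0 ∈ S) : dist (β S) q < ε := by
    have hlt := (hclose S h0).trans_le (min_le_right _ _)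
    linarith [dist_triangle (β S) b q]
  have hβD (S : Set ℤ) : supp (β S) ⊆ D * B := fun g hg => by
    by_contra hgD
    exact notMem_orbitSupp.mpr ((hoff S g hgD).trans hc'.le) hg
  refine ⟨i, b, R * D, U, r, max T n, β, hi, hβ,
    hβ.isBarrierFamily hE hf hRD (fun S hS t ht => ?_) (fun S hS h0 t ht m ⟨d, hd, hdm⟩ => ?_)
      fun y hy => hstep _ _ hy (hVstep y), hβq⟩
  · rw [← mul_normal_mul_mul_normal]
    exact (hgrowth _ (hβ.finite_supp hS) t (le_of_max_le_left ht)).trans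
      (Set.mul_subset_mul_left (hβD S))
  · by_contra! hmr
    refine notMem_orbitSupp.mpr ?_ hdm
    exact hn (β S) ⟨hβ.finite_supp hS, ⟨c', hc', hoff S⟩, hβq S h0⟩
      ((hclose S h0).trans_le (min_le_left _ _)) t (le_of_max_le_right ht) _
      (Set.mul_mem_mul hd ⟨m, abs_le.mp hmr, rfl⟩)

theorem IsGluing.mem_closure_mortal_of_periodicMortal (hG : IsGluing G x₀ Δ)
    (hf : IsAsympNilpotentEnd G x₀ f) (hzc : ∀ g, Commute g z) (hz : ¬ IsOfFinOrder z)
    (hper : PeriodicMortal G x₀ Δ f z) {q : X} (hq : (supp q).Finite) :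
    q ∈ closure {y | Mortal x₀ f y ∧ (supp y).Finite} := by
  refine Metric.mem_closure_iff.mpr fun ε hε => ?_
  obtain ⟨i, b, D, U, r, T, β, hi, hβ, hbarrier, hdist⟩ :=
    hG.exists_isBarrierFamily_dist_lt hf hzc hz hper hq hε
  obtain ⟨L, hL, hmortal⟩ := hbarrier.exists_mortal_Icc hβ hG hf hz hi
    (hβ.mortal_univ hG.toIsPointedExpansive hper hi)
  refine ⟨_, ⟨hmortal, hβ.finite_supp (Set.finite_Icc _ _)⟩, ?_⟩
  rw [dist_comm]
  exact hdist _ (Set.mem_Icc.mpr ⟨by omega, hL⟩)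

theorem IsGluing.mortal_of_periodicMortal (hG : IsGluing G x₀ Δ)
    (hf : IsAsympNilpotentEnd G x₀ f) (hzc : ∀ g, Commute g z) (hz : ¬ IsOfFinOrder z)
    (hper : PeriodicMortal G x₀ Δ f z) {x : X} (hx : (supp x).Finite) : Mortal x₀ f x := by
  obtain ⟨R, hR, T, hgrowth⟩ := hG.exists_supp_iterate_subset_of_mem_closure hf
  exact hG.mortal_of_supp_iterate_subset hf (hR.mul hx)
    (hgrowth x (hG.mem_closure_mortal_of_periodicMortal hf hzc hz hper hx))

end CentralStep

section Transport

theorem IsAsympNilpotentEnd.of_semiconj {G K X Y : Type*} [SMul G X] [SMul K Y]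
    [TopologicalSpace X] [TopologicalSpace Y] {f : X → X} {F : Y → Y} {ι : Y → X} {y₀ : Y}
    (hf : IsAsympNilpotentEnd G (ι y₀) f) (hι : IsEmbedding ι) (hF : Function.Semiconj ι F f)
    {σ : K → G} (hσ : ∀ k y, ι (k • y) = σ k • ι y) : IsAsympNilpotentEnd K y₀ F where
  continuous := hι.continuous_iff.mpr <| by
    rw [hF.comp_eq]
    exact hf.continuous.comp hι.continuous
  map_smul k y := hι.injective <| by rw [hF.eq, hσ, hf.map_smul, hσ, hF.eq]
  tendsto y := hι.tendsto_nhds_iff.mpr <| by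
    simpa only [Function.comp_def, (hF.iterate_right _).eq] using hf.tendsto (ι y)

theorem Mortal.of_semiconj {X Y : Type*} {f : X → X} {F : Y → Y} {ι : Y → X} {y₀ y : Y}
    (hF : Function.Semiconj ι F f) (hy : Mortal y₀ F y) : Mortal (ι y₀) f (ι y) :=
  let ⟨n, hn⟩ := hy
  ⟨n, by rw [← (hF.iterate_right n).eq, hn]⟩

/-- Over `G`, asymptotic nilpotency kills every finitely supported point of every gluing system. -/
def FinSuppMortal (G : Type*) [Group G] : Prop :=
  ∀ (X : Type) [MetricSpace X] [CompactSpace X] [MulAction G X] [ContinuousConstSMul G X]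
    (x₀ : X) (Δ : ℝ) (f : X → X), IsGluing G x₀ Δ → IsAsympNilpotentEnd G x₀ f →
    ∀ x, (orbitSupp G x₀ Δ x).Finite → Mortal x₀ f x

theorem FinSuppMortal.of_finite (G : Type*) [Group G] [Finite G] : FinSuppMortal G :=
  fun _ _ _ _ _ _ _ _ hG hf _ _ =>
    hG.mortal_of_supp_iterate_subset hf Set.finite_univ (T := 0) fun _ _ => Set.subset_univ _

end Transport

section FixedPoints

variable {G X : Type*} [Group G] [MetricSpace X] [MulAction G X] {x₀ : X} {Δ : ℝ}
  {H : Subgroup G}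

open MulAction

theorem preimage_image_mul {P : Type*} [Group P] (φ : G →* P) (N : Set G) (S : Set P) :
    φ ⁻¹' (φ '' N * S) = N * φ ⁻¹' S := by
  ext g
  constructor
  · rintro ⟨_, ⟨n, hn, rfl⟩, s, hs, hg⟩
    refine ⟨n, hn, n⁻¹ * g, ?_, mul_inv_cancel_left n g⟩
    have hs' : φ (n⁻¹ * g) = s := by rw [map_mul, map_inv, ← hg, inv_mul_cancel_left]
    rwa [Set.mem_preimage, hs']
  · rintro ⟨n, hn, s, hs, rfl⟩
    exact ⟨φ n, ⟨n, hn, rfl⟩, φ s, hs, (map_mul φ n s).symm⟩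

theorem isClosed_fixedPoints_subgroup [ContinuousConstSMul G X] : IsClosed (fixedPoints H X) := by
  simp only [fixedPoints, Set.ofPred_forall]
  exact isClosed_iInter fun h => isClosed_eq (continuous_const_smul (h : G)) continuous_id

theorem IsPointedExpansive.mem_fixedPoints_of_dist_lt (hE : IsPointedExpansive G x₀ Δ) {y : X}
    (hy : ∀ g : G, ∃ w : X, ∀ h : H, dist ((g * h : G) • y) w < Δ / 2) : y ∈ fixedPoints H X := by
  refine fun h => hE.eq_of_dist_le _ _ fun g => ?_
  obtain ⟨w, hw⟩ := hy g
  have hgh : dist (g • h • y) w < Δ / 2 := by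
    rw [Subgroup.smul_def, ← mul_smul]
    exact hw h
  have hg : dist (g • y) w < Δ / 2 := by simpa using hw 1
  linarith [dist_triangle_right (g • h • y) (g • y) w]

variable [H.Normal]

theorem preimage_mk_orbitSupp {y₀ : fixedPoints H X} (hy₀ : (y₀ : X) = x₀) (y : fixedPoints H X) :
    QuotientGroup.mk' H ⁻¹' orbitSupp (G ⧸ H) y₀ Δ y = orbitSupp G x₀ Δ y :=
  hy₀ ▸ rfl

theorem IsGluing.fixedPoints (hG : IsGluing G x₀ Δ) :
    IsGluing (G ⧸ H) (⟨x₀, fun h => hG.smul_base h⟩ : fixedPoints H X) Δ := by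
  obtain ⟨N, hN, hglue⟩ := hG.glues
  set y₀ : MulAction.fixedPoints H X := ⟨x₀, fun h => hG.smul_base h⟩
  refine ⟨⟨fun q => ?_, hG.pos, fun y y' h => ?_⟩, QuotientGroup.mk' H '' N, hN.image _,
    fun I p hp => ?_⟩
  · induction q using QuotientGroup.induction_on with
    | H g => exact Subtype.ext (hG.smul_base g)
  · exact Subtype.ext (hG.eq_of_dist_le _ _ fun g => h g)
  have hmem (g : G) (i : I) : g ∈ N * orbitSupp G x₀ Δ (p i : X) ↔
      (g : G ⧸ H) ∈ QuotientGroup.mk' H '' N * orbitSupp (G ⧸ H) y₀ Δ (p i) := by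
    rw [← preimage_mk_orbitSupp (y₀ := y₀) rfl, ← preimage_image_mul]
    rfl
  obtain ⟨y, hy, hy₀⟩ := hglue I (fun i => p i) fun i j hij =>
    Set.disjoint_left.mpr fun g hi hj =>
      Set.disjoint_left.mp (hp hij) ((hmem g i).mp hi) ((hmem g j).mp hj)
  simp only [hmem] at hy hy₀
  have hmk (g : G) (h : H) : ((g * h : G) : G ⧸ H) = g := QuotientGroup.mk_mul_of_mem g h.2
  have hyfix : y ∈ MulAction.fixedPoints H X := by
    refine hG.mem_fixedPoints_of_dist_lt fun g => ?_
    by_cases hg : ∃ i, (g : G ⧸ H) ∈ QuotientGroup.mk' H '' N * orbitSupp (G ⧸ H) y₀ Δ (p i)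
    · obtain ⟨i, hi⟩ := hg
      refine ⟨g • (p i : X), fun h => ?_⟩
      have hfix : (g * h : G) • (p i : X) = g • (p i : X) := by
        rw [mul_smul]
        exact congrArg (g • ·) ((p i).2 h)
      rw [← hfix]
      refine (hy i _ fun j hj hjg => ?_).trans (by linarith [hG.pos])
      exact Set.disjoint_left.mp (hp hj) (hmk g h ▸ hjg) hi
    · push Not at hg
      exact ⟨x₀, fun h => (hy₀ _ ((hmk g h).symm ▸ hg)).trans (by linarith [hG.pos])⟩
  refine ⟨⟨y, hyfix⟩, fun i q hq => ?_, fun q hq => ?_⟩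
  all_goals induction q using QuotientGroup.induction_on
  · exact hy i _ hq
  · exact hy₀ _ hq

theorem FinSuppMortal.mortal_of_mem_fixedPoints {X : Type} [MetricSpace X] [CompactSpace X]
    [MulAction G X] [ContinuousConstSMul G X] {x₀ x : X} {f : X → X} (h : FinSuppMortal (G ⧸ H))
    (hG : IsGluing G x₀ Δ) (hf : IsAsympNilpotentEnd G x₀ f) (hx : x ∈ fixedPoints H X)
    {F : Set G} (hF : F.Finite) (hxF : orbitSupp G x₀ Δ x ⊆ F * H) : Mortal x₀ f x := by
  set y₀ : MulAction.fixedPoints H X := ⟨x₀, fun h => hG.smul_base h⟩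
  have hfix (y : MulAction.fixedPoints H X) : f y ∈ MulAction.fixedPoints H X := fun k =>
    (hf.map_smul k y).symm.trans (congrArg f (y.2 k))
  have hsemi : Function.Semiconj ((↑) : MulAction.fixedPoints H X → X)
      (fun y => ⟨f y, hfix y⟩) f := fun _ => rfl
  have hsmul {q : G ⧸ H} {y : MulAction.fixedPoints H X} : ((q • y : _) : X) = q.out • (y : X) := by
    rw [← quotient_out_smul_fixedPoints]
    rfl
  have : ContinuousConstSMul (G ⧸ H) (MulAction.fixedPoints H X) :=
    IsInducing.subtypeVal.continuousConstSMul _ hsmul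
  have : CompactSpace (MulAction.fixedPoints H X) := isCompact_iff_compactSpace.mp
    isClosed_fixedPoints_subgroup.isCompact
  refine Mortal.of_semiconj hsemi (h _ y₀ Δ _ hG.fixedPoints
    (IsAsympNilpotentEnd.of_semiconj hf IsEmbedding.subtypeVal hsemi fun _ _ => hsmul) ⟨x, hx⟩ ?_)
  refine (hF.image (QuotientGroup.mk' H)).subset fun q hq => ?_
  induction q using QuotientGroup.induction_on with
  | H g =>
    obtain ⟨a, ha, k, hk, rfl⟩ := hxF hq
    exact ⟨a, ha, (QuotientGroup.mk_mul_of_mem a hk).symm⟩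

end FixedPoints

theorem FinSuppMortal.of_commute {G : Type*} [Group G] {z : G} (hzc : ∀ g, Commute g z)
    (hz : ¬ IsOfFinOrder z)
    (h : ∀ n : ℕ, 0 < n → ∀ [(Subgroup.zpowers (z ^ n)).Normal],
      FinSuppMortal (G ⧸ Subgroup.zpowers (z ^ n))) : FinSuppMortal G := by
  intro X _ _ _ _ x₀ Δ f hG hf x hx
  refine hG.mortal_of_periodicMortal hf hzc hz (fun i hi y hy F hF hyF => ?_) hx
  lift i to ℕ using by omega
  rw [zpow_natCast] at hy hyF
  have := normal_zpowers_of_forall_commute fun g => (hzc g).pow_right i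
  refine (h i (by omega)).mortal_of_mem_fixedPoints hG hf ?_ hF hyF
  have hle : Subgroup.zpowers (z ^ i) ≤ MulAction.stabilizer G y := Subgroup.zpowers_le.mpr hy
  exact fun k => hle k.2

section Subgroups

variable {G X : Type*} [Group G] [MetricSpace X] [MulAction G X] {x₀ x : X} {Δ : ℝ}

/-- The points supported on a subgroup `L`, on which `L` acts. -/
def pointsSupportedOn (L : Subgroup G) (x₀ : X) (Δ : ℝ) : SubMulAction L X where
  carrier := {x | orbitSupp G x₀ Δ x ⊆ L}
  smul_mem' l x hx := by
    refine (orbitSupp_smul (l : G) x).trans_subset ?_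
    rintro _ ⟨g, hg, _, rfl, rfl⟩
    exact L.mul_mem (hx hg) (L.inv_mem l.2)

variable {L : Subgroup G}

theorem mem_pointsSupportedOn : x ∈ pointsSupportedOn L x₀ Δ ↔ orbitSupp G x₀ Δ x ⊆ L :=
  Iff.rfl

theorem IsPointedExpansive.base_mem_pointsSupportedOn (hE : IsPointedExpansive G x₀ Δ) :
    x₀ ∈ pointsSupportedOn L x₀ Δ :=
  mem_pointsSupportedOn.mpr (hE.orbitSupp_base.trans_subset (Set.empty_subset _))

theorem isClosed_pointsSupportedOn [ContinuousConstSMul G X] :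
    IsClosed (pointsSupportedOn L x₀ Δ : Set X) := by
  have heq : (pointsSupportedOn L x₀ Δ : Set X) =
      ⋂ (g : G) (_ : g ∉ L), {x | dist (g • x) x₀ ≤ Δ / 4} := by
    ext x
    simp only [Set.mem_iInter, ← notMem_orbitSupp, SetLike.mem_coe, mem_pointsSupportedOn]
    exact forall_congr' fun g => not_imp_not.symm
  rw [heq]
  exact isClosed_iInter fun g => isClosed_iInter fun _ =>
    isClosed_le ((continuous_const_smul g).dist continuous_const) continuous_const

theorem image_orbitSupp_pointsSupportedOn (hx₀ : x₀ ∈ pointsSupportedOn L x₀ Δ)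
    (y : pointsSupportedOn L x₀ Δ) :
    L.subtype '' orbitSupp L ⟨x₀, hx₀⟩ Δ y = orbitSupp G x₀ Δ (y : X) := by
  have hpre : orbitSupp L ⟨x₀, hx₀⟩ Δ y = L.subtype ⁻¹' orbitSupp G x₀ Δ (y : X) :=
    rfl
  rw [hpre, Set.image_preimage_eq_of_subset]
  simpa using mem_pointsSupportedOn.mp y.2

theorem Glues.isGluing_pointsSupportedOn {N : Set G} (hN : Glues x₀ Δ (Δ / 4) N)
    (hE : IsPointedExpansive G x₀ Δ) (hNfin : N.Finite) (hNL : N ⊆ L) :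
    IsGluing L (⟨x₀, hE.base_mem_pointsSupportedOn⟩ : pointsSupportedOn L x₀ Δ) Δ := by
  set y₀ : pointsSupportedOn L x₀ Δ := ⟨x₀, hE.base_mem_pointsSupportedOn⟩
  have himage (y : pointsSupportedOn L x₀ Δ) :
      L.subtype '' (L.subtype ⁻¹' N * orbitSupp L y₀ Δ y) = N * orbitSupp G x₀ Δ (y : X) := by
    rw [Set.image_mul, image_orbitSupp_pointsSupportedOn y₀.2,
      Set.image_preimage_eq_of_subset (by simpa using hNL)]
  refine ⟨⟨fun l => Subtype.ext (hE.smul_base l), hE.pos, fun y y' h => Subtype.ext ?_⟩,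
    L.subtype ⁻¹' N, hNfin.preimage L.subtype_injective.injOn, fun I p hp => ?_⟩
  · refine hE.eq_of_dist_le _ _ fun g => ?_
    by_cases hg : g ∈ L
    · exact h ⟨g, hg⟩
    · linarith [dist_triangle_right (g • (y : X)) (g • (y' : X)) x₀, hE.pos,
        notMem_orbitSupp.mp fun hmem => hg (mem_pointsSupportedOn.mp y.2 hmem),
        notMem_orbitSupp.mp fun hmem => hg (mem_pointsSupportedOn.mp y'.2 hmem)]
  obtain ⟨y, hy, hy₀⟩ := hN I (fun i => p i) fun i j hij => by
    simp only [← himage]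
    exact (Set.disjoint_image_iff L.subtype_injective).mpr (hp hij)
  simp only [← himage] at hy hy₀
  have hmem {l : L} {S : Set L} : (l : G) ∈ L.subtype '' S ↔ l ∈ S :=
    L.subtype_injective.mem_set_image
  refine ⟨⟨y, mem_pointsSupportedOn.mpr fun g hg => ?_⟩,
    fun i l hl => hy i l fun j hj => hmem.not.mpr (hl j hj),
    fun l hl => hy₀ l fun j => hmem.not.mpr (hl j)⟩
  by_contra hgL
  refine notMem_orbitSupp.mpr (hy₀ g fun j hj => hgL ?_).le hg
  obtain ⟨l, -, rfl⟩ := hj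
  exact l.2

theorem FinSuppMortal.mortal_of_supp_subset {X : Type} [MetricSpace X] [CompactSpace X]
    [MulAction G X] [ContinuousConstSMul G X] {x₀ x : X} {f : X → X} (h : FinSuppMortal L)
    (hE : IsPointedExpansive G x₀ Δ) (hf : IsAsympNilpotentEnd G x₀ f) {N W : Set G}
    (hNfin : N.Finite) (hN : Glues x₀ Δ (Δ / 4) N) (hNL : N ⊆ L)
    (hW : ∀ x, orbitSupp G x₀ Δ (f x) ⊆ W * orbitSupp G x₀ Δ x) (hWL : W ⊆ L)
    (hx : (orbitSupp G x₀ Δ x).Finite) (hxL : orbitSupp G x₀ Δ x ⊆ L) : Mortal x₀ f x := by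
  set y₀ : pointsSupportedOn L x₀ Δ := ⟨x₀, hE.base_mem_pointsSupportedOn⟩
  have hfL (y : pointsSupportedOn L x₀ Δ) : f y ∈ pointsSupportedOn L x₀ Δ :=
    mem_pointsSupportedOn.mpr <| (hW y).trans <|
      Set.mul_subset_iff.mpr fun w hw g hg => L.mul_mem (hWL hw) (mem_pointsSupportedOn.mp y.2 hg)
  have hsemi : Function.Semiconj ((↑) : pointsSupportedOn L x₀ Δ → X)
      (fun y => ⟨f y, hfL y⟩) f := fun _ => rfl
  have : ContinuousConstSMul L (pointsSupportedOn L x₀ Δ) :=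
    IsInducing.subtypeVal.continuousConstSMul L.subtype rfl
  have : CompactSpace (pointsSupportedOn L x₀ Δ) := isCompact_iff_compactSpace.mp
    isClosed_pointsSupportedOn.isCompact
  refine Mortal.of_semiconj hsemi (h _ y₀ Δ _ (hN.isGluing_pointsSupportedOn hE hNfin hNL)
    (.of_semiconj hf IsEmbedding.subtypeVal hsemi (σ := L.subtype) fun _ _ => rfl)
    ⟨x, mem_pointsSupportedOn.mpr hxL⟩ ?_)
  refine Set.Finite.of_finite_image ?_ L.subtype_injective.injOn
  rwa [image_orbitSupp_pointsSupportedOn y₀.2]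

theorem IsPointedExpansive.orbitSupp_subset_mul_image (hE : IsPointedExpansive G x₀ Δ)
    {H : Subgroup G} {C : Set G} {ρ : ℝ} (hCH : C * (H : Set G) = Set.univ) (hρ : 0 ≤ ρ)
    (hCρ : ∀ x y : X, dist x y ≤ ρ → ∀ c ∈ C, dist (c • x) (c • y) ≤ Δ / 4) (x : X) :
    orbitSupp G x₀ Δ x ⊆ C * H.subtype '' orbitSupp H x₀ ρ x := fun g hg => by
  obtain ⟨c, hc, h, hh, rfl⟩ := hCH.symm.subset (Set.mem_univ g)
  refine ⟨c, hc, h, ⟨⟨h, hh⟩, ?_, rfl⟩, rfl⟩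
  by_contra hsmall
  refine notMem_orbitSupp.mpr ?_ hg
  have hle := hCρ (h • x) x₀ ((notMem_orbitSupp.mp hsmall).trans (by linarith)) c hc
  rwa [hE.smul_base, ← mul_smul] at hle

theorem mem_preimage_mul_of_mul_mem {H : Subgroup G} {N C : Set G} {S : Set H} {c : G} {h : H}
    (hc : c ∈ C) (hg : c * h ∈ N * (C * H.subtype '' S)) :
    h ∈ H.subtype ⁻¹' (C⁻¹ * (N * C)) * S := by
  obtain ⟨n, hn, _, ⟨c', hc', _, ⟨k, hk, rfl⟩, rfl⟩, heq⟩ := hg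
  refine ⟨h * k⁻¹, ⟨c⁻¹, Set.inv_mem_inv.mpr hc, n * c', Set.mul_mem_mul hn hc', ?_⟩, k, hk,
    inv_mul_cancel_right h k⟩
  have hnc : n * c' * k = c * h := by rw [← heq]; exact mul_assoc _ _ _
  simp [eq_mul_inv_of_mul_eq hnc, mul_assoc]

variable [CompactSpace X] [ContinuousConstSMul G X]

theorem exists_forall_dist_smul_le {C : Set G} (hC : C.Finite) {ε : ℝ} (hε : 0 < ε) :
    ∃ ρ > 0, ∀ x y : X, dist x y ≤ ρ → ∀ c ∈ C, dist (c • x) (c • y) ≤ ε := by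
  have huniform : ∀ᶠ p : X × X in uniformity X, ∀ c ∈ C, dist (c • p.1) (c • p.2) < ε :=
    (eventually_all_finite hC).mpr fun c _ =>
      (CompactSpace.uniformContinuous_of_continuous (continuous_const_smul c))
        (Metric.dist_mem_uniformity hε)
  obtain ⟨ρ, hρ, h⟩ := Metric.uniformity_basis_dist_le.eventually_iff.mp huniform
  exact ⟨ρ, hρ, fun x y hxy c hc => (h (x := (x, y)) hxy c hc).le⟩

theorem IsGluing.exists_isGluing_subgroup (hG : IsGluing G x₀ Δ) (H : Subgroup G) [H.FiniteIndex] :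
    ∃ ρ, IsGluing H x₀ ρ := by
  have hΔ := hG.pos
  obtain ⟨C, hCH, h1C⟩ := H.exists_isComplement_left 1
  have hCfin : C.Finite := hCH.finite_left
  obtain ⟨ρ, hρ, hCρ⟩ := exists_forall_dist_smul_le (X := X) hCfin (show 0 < Δ / 4 by positivity)
  obtain ⟨N, hNfin, -, hN⟩ := hG.exists_glues (show 0 < ρ / 4 by positivity)
  set N' : Set H := H.subtype ⁻¹' (C⁻¹ * (N * C))
  have hcover (g : G) : ∃ c ∈ C, ∃ h : H, c * h = g := by
    obtain ⟨c, hc, h, hh, rfl⟩ := hCH.mul_eq.symm.subset (Set.mem_univ g)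
    exact ⟨c, hc, ⟨h, hh⟩, rfl⟩
  have hreduce {p : X} {c : G} {h : H} (hc : c ∈ C) (hg : c * h ∈ N * orbitSupp G x₀ Δ p) :
      h ∈ N' * orbitSupp H x₀ ρ p :=
    mem_preimage_mul_of_mul_mem hc <|
      Set.mul_subset_mul_left (hG.orbitSupp_subset_mul_image hCH.mul_eq hρ.le hCρ p) hg
  refine ⟨ρ, ⟨fun h => hG.smul_base h, hρ, fun x y hxy => ?_⟩, N',
    (hCfin.inv.mul (hNfin.mul hCfin)).preimage H.subtype_injective.injOn, fun I p hp => ?_⟩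
  · refine hG.eq_of_dist_le x y fun g => ?_
    obtain ⟨c, hc, h, rfl⟩ := hcover g
    rw [mul_smul, mul_smul]
    exact (hCρ _ _ (hxy h) c hc).trans (by linarith)
  · obtain ⟨y, hy, hy₀⟩ := hN I p fun i j hij => Set.disjoint_left.mpr fun g hi hj => by
      obtain ⟨c, hc, h, rfl⟩ := hcover g
      exact Set.disjoint_left.mp (hp hij) (hreduce hc hi) (hreduce hc hj)
    have hreduce₁ {i : I} {h : H} (hh : h ∉ N' * orbitSupp H x₀ ρ (p i)) :
        (h : G) ∉ N * orbitSupp G x₀ Δ (p i) :=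
      fun hmem => hh (hreduce h1C ((one_mul (h : G)).symm ▸ hmem))
    exact ⟨y, fun i h hh => hy i h fun j hj => hreduce₁ (hh j hj),
      fun h hh => hy₀ h fun j => hreduce₁ (hh j)⟩

end Subgroups

theorem FinSuppMortal.of_finiteIndex {G : Type*} [Group G] {H : Subgroup G} [H.FiniteIndex]
    (h : FinSuppMortal H) : FinSuppMortal G := by
  intro X _ _ _ _ x₀ Δ f hG hf x hx
  obtain ⟨ρ, hH⟩ := hG.exists_isGluing_subgroup H
  obtain ⟨N, hN, hsmall⟩ := hG.exists_finite_dist_base_lt (div_pos hH.pos four_pos)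
  have : ContinuousConstSMul H X := ⟨fun k => continuous_const_smul (k : G)⟩
  refine h X x₀ ρ f hH ⟨hf.continuous, fun h => hf.map_smul h, hf.tendsto⟩ x ?_
  refine ((hN.mul hx).preimage H.subtype_injective.injOn).subset fun k hk => ?_
  by_contra hmem
  exact notMem_orbitSupp.mpr (hsmall x k hmem).le hk

section UpperCentralStep

variable {G : Type*} [Group G] {K L M : Subgroup G} [K.Normal] {x z : G}

open Subgroup

theorem le_upperCentralSeriesStep : K ≤ K.upperCentralSeriesStep := fun k hk g => by
  rw [commutatorElement_def, mul_assoc, mul_assoc]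
  exact K.mul_mem hk (by simpa [mul_assoc] using Normal.conj_mem ‹_› _ (K.inv_mem hk) g)

theorem sup_zpowers_le_upperCentralSeriesStep (hz : z ∈ K.upperCentralSeriesStep) :
    K ⊔ zpowers z ≤ K.upperCentralSeriesStep :=
  sup_le le_upperCentralSeriesStep (zpowers_le.mpr hz)

theorem upperCentralSeriesStep_mono [L.Normal] (h : K ≤ L) :
    K.upperCentralSeriesStep ≤ L.upperCentralSeriesStep :=
  fun _ hx g => h (hx g)

theorem normal_of_le_upperCentralSeriesStep (hKM : K ≤ M) (hM : M ≤ K.upperCentralSeriesStep) :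
    M.Normal := by
  refine ⟨fun m hm g => ?_⟩
  have heq : g * m * g⁻¹ = ⁅m, g⁆⁻¹ * m := by group
  rw [heq]
  exact M.mul_mem (M.inv_mem (hKM (hM hm g))) hm

theorem commutatorElement_pow_left {g : G} (h : Commute ⁅z, g⁆ z) (n : ℕ) :
    ⁅z ^ n, g⁆ = ⁅z, g⁆ ^ n := by
  induction n with
  | zero => simp
  | succ n ih =>
    rw [pow_succ', commutatorElement_mul_left_eq_conj_mul, ih, (h.symm.pow_right n).eq,
      mul_inv_cancel_right, pow_succ]

theorem mk_commutatorElement_eq_one {g : G} (hx : x ∈ K.upperCentralSeriesStep) :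
    ⁅QuotientGroup.mk' K x, QuotientGroup.mk' K g⁆ = 1 := by
  rw [← map_commutatorElement, ← MonoidHom.mem_ker, QuotientGroup.ker_mk']
  exact hx g

theorem pow_mem_upperCentralSeriesStep [L.Normal] {n : ℕ} (hz : z ∈ L.upperCentralSeriesStep)
    (hL : L ≤ K.upperCentralSeriesStep) (hpow : ∀ x ∈ L, x ^ n ∈ K) :
    z ^ n ∈ K.upperCentralSeriesStep := by
  intro g
  set π := QuotientGroup.mk' K
  have hcomm : Commute ⁅π z, π g⁆ (π z) := by
    rw [← commutatorElement_eq_one_iff_commute, ← map_commutatorElement π z g]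
    exact mk_commutatorElement_eq_one (hL (hz g))
  have hn : ⁅z, g⁆ ^ n ∈ π.ker := (QuotientGroup.ker_mk' K).symm ▸ hpow _ (hz g)
  rw [← QuotientGroup.ker_mk' K, MonoidHom.mem_ker, map_commutatorElement, map_pow,
    commutatorElement_pow_left hcomm, ← map_commutatorElement, ← map_pow, hn]

theorem mem_upperCentralSeriesStep_of_closure_eq_top {S : Set G} (hS : closure S = ⊤)
    (hx : ∀ s ∈ S, ⁅x, s⁆ ∈ K) : x ∈ K.upperCentralSeriesStep := by
  intro g
  induction (hS ▸ mem_top g : g ∈ closure S) using closure_induction with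
  | mem s hs => exact hx s hs
  | one => simp
  | mul a b _ _ ha hb =>
    rw [commutatorElement_mul_right_eq_mul_conj]
    simpa only [mul_assoc] using K.mul_mem ha (Normal.conj_mem ‹_› _ hb a)
  | inv a _ ha =>
    have heq : ⁅x, a⁻¹⁆ = a⁻¹ * ⁅x, a⁆⁻¹ * a⁻¹⁻¹ := by group
    rw [heq]
    exact Normal.conj_mem ‹_› _ (K.inv_mem ha) a⁻¹

end UpperCentralStep

section CentrallyReducible

variable {G : Type*} [Group G] {K L : Subgroup G} {z : G}

open Subgroup

theorem relIndex_zpowers_pow_ne_zero {n : ℕ} (hn : 0 < n) :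
    (zpowers (z ^ n)).relIndex (zpowers z) ≠ 0 := by
  have : Finite (zpowers z ⧸ (zpowers (z ^ n)).subgroupOf (zpowers z)) := by
    refine .of_surjective
      (fun k : Set.Ico (0 : ℤ) n => ((⟨z ^ (k : ℤ), zpow_mem_zpowers z k⟩ : zpowers z) :
        zpowers z ⧸ (zpowers (z ^ n)).subgroupOf (zpowers z))) ?_
    intro q
    obtain ⟨⟨_, m, rfl⟩, rfl⟩ := QuotientGroup.mk_surjective q
    have hn' : (0 : ℤ) < n := by exact_mod_cast hn
    refine ⟨⟨m % n, Int.emod_nonneg m hn'.ne', Int.emod_lt_of_pos m hn'⟩,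
      QuotientGroup.eq.mpr (mem_subgroupOf.mpr ⟨m / n, ?_⟩)⟩
    change (z ^ n) ^ (m / n) = (z ^ (m % n))⁻¹ * z ^ m
    rw [← zpow_natCast, ← zpow_mul, ← zpow_neg, ← zpow_add]
    congr 1
    linarith [Int.emod_add_mul_ediv m n]
  exact index_ne_zero_of_finite

theorem relIndex_sup_sup_ne_zero {N : Subgroup G} [(K ⊔ N).Normal] (hKL : K ≤ L)
    (h : K.relIndex L ≠ 0) : (K ⊔ N).relIndex (L ⊔ N) ≠ 0 := by
  rw [← sup_eq_left.mpr hKL, sup_assoc, relIndex_sup_right]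
  exact fun h₀ => h (relIndex_eq_zero_of_le_left le_sup_left h₀)

/-- A normal subgroup is centrally reducible if one reaches a subgroup of finite index from it by
repeatedly choosing an element `z` that is central modulo the subgroup and adjoining a power of `z`,
for every choice of the exponents. -/
inductive IsCentrallyReducible {G : Type*} [Group G] : Subgroup G → Prop
  | of_finiteIndex (K : Subgroup G) [K.Normal] [K.FiniteIndex] : IsCentrallyReducible K
  | of_zpowers (K : Subgroup G) [K.Normal] (z : G) (hz : z ∈ K.upperCentralSeriesStep)
      (h : ∀ n : ℕ, 0 < n → IsCentrallyReducible (K ⊔ zpowers (z ^ n))) : IsCentrallyReducible K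

namespace IsCentrallyReducible

theorem finSuppMortal {Q : Type*} [Group Q] (hK : IsCentrallyReducible K) (φ : G →* Q)
    (hφ : Function.Surjective φ) (hker : φ.ker = K) : FinSuppMortal Q := by
  induction hK generalizing Q with
  | of_finiteIndex K =>
    subst hker
    have : Finite Q := .of_equiv _ (QuotientGroup.quotientKerEquivOfSurjective φ hφ).toEquiv
    exact .of_finite Q
  | of_zpowers K z hz _ ih =>
    by_cases hfin : IsOfFinOrder (φ z)
    · obtain ⟨n, hn, hpow⟩ := isOfFinOrder_iff_pow_eq_one.mp hfin
      refine ih n hn φ hφ (hker.trans (sup_eq_left.mpr (zpowers_le.mpr ?_)).symm)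
      rw [← hker, MonoidHom.mem_ker, map_pow, hpow]
    · have hcomm (q : Q) : Commute q (φ z) := by
        obtain ⟨g, rfl⟩ := hφ q
        rw [Commute.symm_iff, ← commutatorElement_eq_one_iff_commute, ← map_commutatorElement,
          ← MonoidHom.mem_ker, hker]
        exact hz g
      refine .of_commute hcomm hfin fun n hn _ => ?_
      refine ih n hn ((QuotientGroup.mk' _).comp φ) ((QuotientGroup.mk'_surjective _).comp hφ) ?_
      rw [← MonoidHom.comap_ker, QuotientGroup.ker_mk', ← map_pow, ← MonoidHom.map_zpowers,
        comap_map_eq, hker, sup_comm]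

theorem of_relIndex_ne_zero [K.Normal] (hL : IsCentrallyReducible L) (hKL : K ≤ L)
    (hrel : K.relIndex L ≠ 0) (hLK : L ≤ K.upperCentralSeriesStep) : IsCentrallyReducible K := by
  induction hL generalizing K with
  | of_finiteIndex L =>
    have : K.FiniteIndex := ⟨by
      rw [← relIndex_mul_index hKL]
      exact mul_ne_zero hrel FiniteIndex.index_ne_zero⟩
    exact .of_finiteIndex K
  | of_zpowers L z hz _ ih =>
    set e := K.relIndex L
    have hpow : ∀ x ∈ L, x ^ e ∈ K := fun x hx => (K.subgroupOf L).pow_index_mem ⟨x, hx⟩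
    have hze : z ^ e ∈ K.upperCentralSeriesStep := pow_mem_upperCentralSeriesStep hz hLK hpow
    refine .of_zpowers K (z ^ e) hze fun n hn => ?_
    rw [← pow_mul]
    have hle : K ⊔ zpowers (z ^ (e * n)) ≤ K.upperCentralSeriesStep :=
      sup_zpowers_le_upperCentralSeriesStep (pow_mul z e n ▸ pow_mem hze n)
    have : (K ⊔ zpowers (z ^ (e * n))).Normal :=
      normal_of_le_upperCentralSeriesStep le_sup_left hle
    have hmono := upperCentralSeriesStep_mono (le_sup_left : K ≤ K ⊔ zpowers (z ^ (e * n)))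
    exact ih (e * n) (Nat.mul_pos (Nat.pos_of_ne_zero hrel) hn) (sup_le_sup_right hKL _)
      (relIndex_sup_sup_ne_zero hKL hrel)
      (sup_le (hLK.trans hmono) (le_sup_right.trans (hle.trans hmono)))

theorem of_sup_zpowers [K.Normal] (hz : z ∈ K.upperCentralSeriesStep)
    (h : IsCentrallyReducible (K ⊔ zpowers z)) : IsCentrallyReducible K := by
  refine .of_zpowers K z hz fun n hn => ?_
  have hpow : zpowers (z ^ n) ≤ zpowers z := zpowers_le.mpr (pow_mem (mem_zpowers z) n)
  have : (K ⊔ zpowers (z ^ n)).Normal := normal_of_le_upperCentralSeriesStep le_sup_left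
    (sup_zpowers_le_upperCentralSeriesStep (pow_mem hz n))
  refine h.of_relIndex_ne_zero (sup_le_sup_left hpow K) ?_
    ((sup_zpowers_le_upperCentralSeriesStep hz).trans (upperCentralSeriesStep_mono le_sup_left))
  rw [sup_comm K, sup_comm K] at *
  exact relIndex_sup_sup_ne_zero hpow (relIndex_zpowers_pow_ne_zero hn)

theorem of_sup_closure [K.Normal] {T : Set G} (hT : T.Finite) (hTK : T ⊆ K.upperCentralSeriesStep)
    (h : IsCentrallyReducible (K ⊔ closure T)) : IsCentrallyReducible K := by
  induction T, hT using Set.Finite.induction_on generalizing K with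
  | empty => simpa using h
  | @insert t T _ _ ih =>
    have ht : t ∈ K.upperCentralSeriesStep := hTK (Set.mem_insert t T)
    have : (K ⊔ zpowers t).Normal := normal_of_le_upperCentralSeriesStep le_sup_left
      (sup_zpowers_le_upperCentralSeriesStep ht)
    rw [Set.insert_eq, Subgroup.closure_union, ← zpowers_eq_closure, ← sup_assoc] at h
    exact .of_sup_zpowers ht <|
      ih (((Set.subset_insert t T).trans hTK).trans (upperCentralSeriesStep_mono le_sup_left)) h

end IsCentrallyReducible

theorem lowerCentralSeries_le_upperCentralSeriesStep (j : ℕ) :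
    (⊤ : Subgroup G).lowerCentralSeries j ≤
      ((⊤ : Subgroup G).lowerCentralSeries (j + 1)).upperCentralSeriesStep := fun x hx g => by
  rw [Subgroup.lowerCentralSeries_succ]
  exact commutator_mem_commutator hx (mem_top g)

theorem exists_finite_lowerCentralSeries_eq {S : Set G} (hS : S.Finite) (hclosure : closure S = ⊤)
    (j : ℕ) : ∃ T : Set G, T.Finite ∧
      (⊤ : Subgroup G).lowerCentralSeries (j + 1) ⊔ closure T =
        (⊤ : Subgroup G).lowerCentralSeries j := by
  induction j with
  | zero => exact ⟨S, hS, by simp [hclosure]⟩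
  | succ j ih =>
    set γ := (⊤ : Subgroup G).lowerCentralSeries
    have hsucc (i : ℕ) : γ (i + 1) = ⁅γ i, ⊤⁆ := Subgroup.lowerCentralSeries_succ _ i
    obtain ⟨T, hT, hTj⟩ := ih
    set M := γ (j + 1 + 1) ⊔ closure (Set.image2 (⁅·, ·⁆) T S)
    have hM : M ≤ γ (j + 1) := by
      refine sup_le (Subgroup.lowerCentralSeries_antitone _ (Nat.le_succ _)) ((closure_le _).mpr ?_)
      rintro _ ⟨t, ht, s, -, rfl⟩
      rw [hsucc]
      exact commutator_mem_commutator (hTj ▸ mem_sup_right (subset_closure ht)) (mem_top s)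
    have : M.Normal := normal_of_le_upperCentralSeriesStep le_sup_left
      (hM.trans (lowerCentralSeries_le_upperCentralSeriesStep _))
    have hstep : γ j ≤ M.upperCentralSeriesStep := by
      rw [← hTj]
      refine sup_le ((lowerCentralSeries_le_upperCentralSeriesStep _).trans
        (upperCentralSeriesStep_mono le_sup_left)) ((closure_le _).mpr fun t ht => ?_)
      exact mem_upperCentralSeriesStep_of_closure_eq_top hclosure fun s hs =>
        mem_sup_right (subset_closure (Set.mem_image2_of_mem ht hs))
    refine ⟨_, hT.image2 _ hS, hM.antisymm ?_⟩
    rw [hsucc, commutator_le]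
    exact fun a ha b _ => hstep ha b

theorem IsCentrallyReducible.lowerCentralSeries (hG : Group.FG G) (j : ℕ) :
    IsCentrallyReducible ((⊤ : Subgroup G).lowerCentralSeries j) := by
  obtain ⟨S, hclosure, hS⟩ := Group.fg_iff.mp hG
  induction j with
  | zero => exact .of_finiteIndex ⊤
  | succ j ih =>
    obtain ⟨T, hT, hTj⟩ := exists_finite_lowerCentralSeries_eq hS hclosure j
    refine .of_sup_closure hT (fun t ht => lowerCentralSeries_le_upperCentralSeriesStep j ?_)
      (hTj.symm ▸ ih)
    exact hTj ▸ mem_sup_right (subset_closure ht)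

theorem FinSuppMortal.of_fg_of_isNilpotent (hG : Group.FG G) (hnil : Group.IsNilpotent G) :
    FinSuppMortal G := by
  obtain ⟨c, hc⟩ := Subgroup.nilpotent_iff_lowerCentralSeries.mp hnil
  exact (IsCentrallyReducible.lowerCentralSeries hG c).finSuppMortal (MonoidHom.id G)
    Function.surjective_id ((MonoidHom.ker_id).trans hc.symm)

end CentrallyReducible

section VirtuallyNilpotent

variable {G : Type*} [Group G] {X : Type} [MetricSpace X] [CompactSpace X] [MulAction G X]
  [ContinuousConstSMul G X] {x₀ : X} {Δ : ℝ} {f : X → X}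

theorem exists_finiteIndex_isNilpotent_subgroup
    (hG : ∃ H : Subgroup G, H.FiniteIndex ∧ Group.IsNilpotent H) (L : Subgroup G) :
    ∃ H : Subgroup L, H.FiniteIndex ∧ Group.IsNilpotent H := by
  obtain ⟨H, _, _⟩ := hG
  refine ⟨H.subgroupOf L, inferInstance, ?_⟩
  let φ : H.subgroupOf L →* H :=
    (L.subtype.comp (H.subgroupOf L).subtype).codRestrict H fun k => k.2
  have hφ : Function.Injective φ := fun a b hab =>
    Subtype.ext (Subtype.ext (congrArg (fun h : H => (h : G)) hab))
  exact Subgroup.isNilpotent_of_ker_le_center φ ((φ.ker_eq_bot_iff.mpr hφ).le.trans bot_le)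

theorem FinSuppMortal.of_fg_of_exists_finiteIndex_isNilpotent (hfg : Group.FG G)
    (hG : ∃ H : Subgroup G, H.FiniteIndex ∧ Group.IsNilpotent H) : FinSuppMortal G := by
  obtain ⟨H, _, hH⟩ := hG
  exact .of_finiteIndex (.of_fg_of_isNilpotent inferInstance hH)

theorem IsGluing.mortal_of_finite_orbitSupp (hG : IsGluing G x₀ Δ)
    (hf : IsAsympNilpotentEnd G x₀ f)
    (hlvn : ∀ L : Subgroup G, L.FG → ∃ H : Subgroup L, H.FiniteIndex ∧ Group.IsNilpotent H)
    {x : X} (hx : (orbitSupp G x₀ Δ x).Finite) : Mortal x₀ f x := by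
  obtain ⟨N, hNfin, hN⟩ := hG.glues
  obtain ⟨W, hWfin, hW⟩ := hG.exists_supp_iterate_subset hf 1
  set L := Subgroup.closure (N ∪ W ∪ orbitSupp G x₀ Δ x)
  have hLfg : L.FG := (Subgroup.fg_iff L).mpr ⟨_, rfl, (hNfin.union hWfin).union hx⟩
  have hsub : N ∪ W ∪ orbitSupp G x₀ Δ x ⊆ L := Subgroup.subset_closure
  simp only [Set.union_subset_iff] at hsub
  have hmortal : FinSuppMortal L := .of_fg_of_exists_finiteIndex_isNilpotent
    ((Group.fg_iff_subgroup_fg L).mpr hLfg) (hlvn L hLfg)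
  exact hmortal.mortal_of_supp_subset hG.toIsPointedExpansive hf hNfin hN hsub.1.1 hW hsub.1.2 hx
    hsub.2

theorem IsGluing.exists_iterate_eq_base (hG : IsGluing G x₀ Δ) (hf : IsAsympNilpotentEnd G x₀ f)
    (hdense : Dense {x | Mortal x₀ f x ∧ (orbitSupp G x₀ Δ x).Finite}) :
    ∃ n, ∀ x, f^[n] x = x₀ := by
  obtain ⟨R, hR, T, hgrowth⟩ := hG.exists_supp_iterate_subset_of_mem_closure hf
  have hquarter : 0 < Δ / 4 := div_pos hG.pos four_pos
  have hsmall {x : X} {n : ℕ} (hx : ∀ r ∈ R, dist (r⁻¹ • f^[n] x) x₀ < Δ / 4) :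
      ∀ t ≥ n + T, dist (f^[t] x) x₀ ≤ Δ / 4 := by
    intro t ht
    have hone : (1 : G) ∉ orbitSupp G x₀ Δ (f^[t - n] (f^[n] x)) := fun h => by
      obtain ⟨r, hr, s, hs, hrs⟩ := hgrowth _ (hdense _) (t - n) (by omega) h
      rw [eq_inv_of_mul_eq_one_right hrs] at hs
      exact notMem_orbitSupp.mpr (hx r hr).le hs
    rwa [notMem_orbitSupp, one_smul, ← Function.iterate_add_apply, Nat.sub_add_cancel (by omega)]
      at hone
  let U (n : ℕ) : Set X := {x | ∀ r ∈ R, dist (r⁻¹ • f^[n] x) x₀ < Δ / 4}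
  have hUopen (n : ℕ) : IsOpen (U n) := by
    have hcont : Continuous f^[n] := hf.continuous.iterate n
    simp only [U, Set.ofPred_forall]
    exact hR.isOpen_biInter fun r _ => isOpen_lt (by fun_prop) continuous_const
  have hUcover (x : X) : x ∈ ⋃ n, U n := by
    obtain ⟨n, hn⟩ := (hG.eventually_forall_dist_lt hf hR.inv hquarter x).exists
    exact Set.mem_iUnion.mpr ⟨n, fun r hr => hn _ (Set.inv_mem_inv.mpr hr)⟩
  obtain ⟨A, hA⟩ := isCompact_univ.elim_finite_subcover U hUopen fun x _ => hUcover x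
  refine ⟨A.sup id + T, fun x => hG.eq_of_dist_le _ _ fun g => ?_⟩
  obtain ⟨n, hnA, hn⟩ := Set.mem_iUnion₂.mp (hA (Set.mem_univ (g • x)))
  have hle : n ≤ A.sup id := Finset.le_sup (f := id) hnA
  rw [hG.smul_base, ← hf.iterate_smul]
  exact (hsmall hn _ (by omega)).trans (by linarith)

end VirtuallyNilpotent

theorem Homoclinic.finite_orbitSupp {G X : Type} [Group G] [MetricSpace X] [MulAction G X]
    {x₀ x : X} {Δ : ℝ} (hx : Homoclinic G x₀ x) (hΔ : 0 < Δ) : (orbitSupp G x₀ Δ x).Finite := by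
  obtain ⟨E, hE⟩ := hx (Δ / 4) (div_pos hΔ four_pos)
  refine E.finite_toSet.subset fun g hg => ?_
  by_contra hgE
  exact notMem_orbitSupp.mpr (hE g hgE).le hg

theorem statement19_general {G X : Type} [Group G] [MetricSpace X] [CompactSpace X]
    [MulAction G X]
    (hcont : ∀ g : G, Continuous fun x : X => g • x)
    (x₀ : X) (hx₀ : ∀ g : G, g • x₀ = x₀)
    (hlvn : ∀ L : Subgroup G, L.FG → ∃ H : Subgroup L, H.FiniteIndex ∧ Group.IsNilpotent H)
    (hexp : ∃ Δ : ℝ, 0 < Δ ∧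
      ∀ x y : X, (∀ g : G, dist (g • x) (g • y) ≤ Δ) → x = y)
    (hglue : ZeroGluing G x₀)
    (hhomo : Dense {x : X | Homoclinic G x₀ x})
    (f : X → X) (hf : Continuous f)
    (hfeq : ∀ (g : G) (x : X), f (g • x) = g • f x)
    (hAN : ∀ x : X, Tendsto (fun n => f^[n] x) atTop (𝓝 x₀)) :
    ∃ n : ℕ, ∀ x : X, f^[n] x = x₀ := by
  have : ContinuousConstSMul G X := ⟨hcont⟩
  obtain ⟨Δ, hΔ, hsep⟩ := hexp
  have hG : IsGluing G x₀ Δ := hglue.isGluing ⟨hx₀, hΔ, hsep⟩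
  have hend : IsAsympNilpotentEnd G x₀ f := ⟨hf, hfeq, hAN⟩
  refine hG.exists_iterate_eq_base hend (hhomo.mono fun x hx => ?_)
  have hfin := hx.finite_orbitSupp hΔ
  exact ⟨hG.mortal_of_finite_orbitSupp hend hlvn hfin, hfin⟩

/-- Let `G` be a virtually nilpotent group and `(G, X, 0)` an expansive
`0`-gluing pointed dynamical system with dense homoclinic points. Then every
asymptotically nilpotent endomorphism of the system is nilpotent. -/
theorem statement19 {G X : Type} [Group G] [MetricSpace X] [CompactSpace X]
    [MulAction G X]
    (hcont : ∀ g : G, Continuous fun x : X => g • x)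
    (x₀ : X) (hx₀ : ∀ g : G, g • x₀ = x₀)
    (hvn : ∃ H : Subgroup G, H.FiniteIndex ∧ Group.IsNilpotent H)
    (hexp : ∃ Δ : ℝ, 0 < Δ ∧
      ∀ x y : X, (∀ g : G, dist (g • x) (g • y) ≤ Δ) → x = y)
    (hglue : ZeroGluing G x₀)
    (hhomo : Dense {x : X | Homoclinic G x₀ x})
    (f : X → X) (hf : Continuous f) (hf₀ : f x₀ = x₀)
    (hfeq : ∀ (g : G) (x : X), f (g • x) = g • f x)
    (hAN : ∀ x : X, Filter.Tendsto (fun n => f^[n] x) Filter.atTop (nhds x₀)) :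
    ∃ n : ℕ, ∀ x : X, f^[n] x = x₀ :=
  statement19_general hcont x₀ hx₀ (fun L _ => exists_finiteIndex_isNilpotent_subgroup hvn L) hexp
    hglue hhomo f hf hfeq hAN
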